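/- arXiv:1103.6102 — 2 statements merged into one kernel-verified Lean document; each statement's English description precedes it below -/
import Mathlib

section
/- Let I > 1 be an integer and let U ⊆ ℝ^{N×n} be open. For 1 ≤ i ≤ I, let ξ_i ∈ ℝ^{N×n} and λ_i > 0 satisfy Σ_{i=1}^I λ_i = 1 and assume (λ_i, ξ_i)_{1≤i≤I} satisfy (H_I(U)). Set ξ = Σ_{i=1}^I λ_i ξ_i and let u_ξ be an affine map with Du_ξ ≡ ξ. Then for every ε > 0 and every bounded open set Ω ⊂ ℝ^n there exist a piecewise affine map u_ε ∈ u_ξ + W_0^{1,∞}(Ω; ℝ^N) and pairwise disjoint open sets Ω_ε^i ⊂ Ω, i = 1,…,I, such that Du_ε(x) ∈ U ∪ B_ε(ξ) a.e. in Ω, Du_ε(x) = ξ_i a.e. in Ω_ε^i for each i, ‖u_ε − u_ξ‖_{L^∞} ≤ ε, and |meas(Ω_ε^i) − λ_i meas(Ω)| ≤ ε for each i = 1,…,I. -/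
open MeasureTheory Filter

attribute [local instance] Classical.propDecidable
attribute [local instance] Matrix.frobeniusNormedAddCommGroup Matrix.frobeniusNormedSpace

noncomputable section

/-- The space of real `N × n` matrices. -/
abbrev Mat (N n : ℕ) : Type := Matrix (Fin N) (Fin n) ℝ

/-- A function `f : ℝ^{N×n} → ℝ` is rank one convex. -/
def RankOneConvexFun {N n : ℕ} (f : Mat N n → ℝ) : Prop :=
  ∀ lam ∈ Set.Icc (0:ℝ) 1, ∀ ξ η : Mat N n, (ξ - η).rank = 1 →
    f (lam • ξ + (1 - lam) • η) ≤ lam * f ξ + (1 - lam) * f η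

/-- The hull `Rco_f E`. -/
def RcoF {N n : ℕ} (E : Set (Mat N n)) : Set (Mat N n) :=
  {ξ | ∀ f : Mat N n → ℝ, RankOneConvexFun f → (∀ η ∈ E, f η ≤ 0) → f ξ ≤ 0}

/-- A set of matrices is rank one convex. -/
def RankOneConvexSet {N n : ℕ} (S : Set (Mat N n)) : Prop :=
  ∀ A ∈ S, ∀ B ∈ S, (A - B).rank = 1 → ∀ t ∈ Set.Icc (0:ℝ) 1, t • A + (1 - t) • B ∈ S

/-- The property `(H_I(U))`, phrased on lists of (weight, matrix) pairs. -/
inductive HIProp {N n : ℕ} (U : Set (Mat N n)) : List (ℝ × Mat N n) → Prop where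
  | single (l : ℝ) (ξ : Mat N n) (hξ : ξ ∈ U) : HIProp U [(l, ξ)]
  | pair (l₁ l₂ : ℝ) (ξ₁ ξ₂ : Mat N n) (h₁ : ξ₁ ∈ U) (h₂ : ξ₂ ∈ U)
      (hrank : (ξ₁ - ξ₂).rank = 1) : HIProp U [(l₁, ξ₁), (l₂, ξ₂)]
  | step (L rest : List (ℝ × Mat N n)) (l₁ l₂ : ℝ) (ξ₁ ξ₂ : Mat N n)
      (hperm : L.Perm ((l₁, ξ₁) :: (l₂, ξ₂) :: rest)) (hrest : rest ≠ [])
      (h₁ : ξ₁ ∈ U) (h₂ : ξ₂ ∈ U) (hrank : (ξ₁ - ξ₂).rank = 1)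
      (hrec : HIProp U ((l₁ + l₂, ((l₁ + l₂)⁻¹) • (l₁ • ξ₁ + l₂ • ξ₂)) :: rest)) :
      HIProp U L

/-- The family `(λ_i, ξ_i)_{1 ≤ i ≤ I}` satisfies `(H_I(U))`. -/
def SatisfiesH {N n : ℕ} (U : Set (Mat N n)) (I : ℕ) (l : Fin I → ℝ)
    (ξ : Fin I → Mat N n) : Prop :=
  HIProp U (List.ofFn fun i => (l i, ξ i))

/-- The gradient of a map `u : ℝ^n → ℝ^N`, as an `N × n` matrix. -/
def matGrad {N n : ℕ} (u : (Fin n → ℝ) → Fin N → ℝ) (x : Fin n → ℝ) : Mat N n :=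
  LinearMap.toMatrix' (fderiv ℝ u x).toLinearMap

/-- `u` is affine on the set `s`. -/
def AffineOn {N n : ℕ} (u : (Fin n → ℝ) → Fin N → ℝ) (s : Set (Fin n → ℝ)) : Prop :=
  ∃ (A : Mat N n) (b : Fin N → ℝ), ∀ x ∈ s, u x = A.mulVec x + b

/-- `u` is piecewise affine on the open set `Ω`. -/
def PiecewiseAffineOn {N n : ℕ} (u : (Fin n → ℝ) → Fin N → ℝ)
    (Ω : Set (Fin n → ℝ)) : Prop :=
  ContinuousOn u (closure Ω) ∧
  ∃ P : ℕ → Set (Fin n → ℝ),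
    (∀ k, IsOpen (P k)) ∧ (∀ k, P k ⊆ Ω) ∧
    (∀ k l, k ≠ l → Disjoint (P k) (P l)) ∧
    volume (Ω \ ⋃ k, P k) = 0 ∧ ∀ k, AffineOn u (P k)

/-- `u` is piecewise `C¹` on the open set `Ω`. -/
def PiecewiseC1On {N n : ℕ} (u : (Fin n → ℝ) → Fin N → ℝ)
    (Ω : Set (Fin n → ℝ)) : Prop :=
  ContinuousOn u (closure Ω) ∧
  ∃ P : ℕ → Set (Fin n → ℝ),
    (∀ k, IsOpen (P k)) ∧ (∀ k, P k ⊆ Ω) ∧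
    (∀ k l, k ≠ l → Disjoint (P k) (P l)) ∧
    volume (Ω \ ⋃ k, P k) = 0 ∧ ∀ k, ContDiffOn ℝ 1 u (P k)

/-- `u ∈ φ + W₀^{1,∞}(Ω; ℝ^N)`: `u` is Lipschitz on `closure Ω` and agrees with `φ`
on the boundary of `Ω`. -/
def MemW01inf {N n : ℕ} (Ω : Set (Fin n → ℝ)) (φ u : (Fin n → ℝ) → Fin N → ℝ) : Prop :=
  (∃ C : NNReal, LipschitzOnWith C u (closure Ω)) ∧ ∀ x ∈ frontier Ω, u x = φ x

/-- `K` has the relaxation property with respect to `E`. -/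
def HasRelaxationProperty {N n : ℕ} (K E : Set (Mat N n)) : Prop :=
  ∀ Ω : Set (Fin n → ℝ), IsOpen Ω → Bornology.IsBounded Ω →
    ∀ ξ ∈ K, ∀ b : Fin N → ℝ,
      ∃ u : ℕ → (Fin n → ℝ) → Fin N → ℝ,
        (∀ ν, PiecewiseAffineOn (u ν) Ω) ∧
        (∀ ν, MemW01inf Ω (fun x => ξ.mulVec x + b) (u ν)) ∧
        (∀ ν, ∀ᵐ x ∂(volume.restrict Ω), matGrad (u ν) x ∈ E ∪ K) ∧
        (∃ C : NNReal, ∀ ν, LipschitzOnWith C (u ν) (closure Ω)) ∧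
        TendstoUniformlyOn u (fun x => ξ.mulVec x + b) atTop (closure Ω) ∧
        Tendsto (fun ν => ∫ x in Ω, Metric.infDist (matGrad (u ν) x) E) atTop (nhds 0)

/-- The singular values of a square matrix, in nondecreasing order:
the square roots of the eigenvalues of `ξ ξᵀ`, sorted. -/
def singularValues {n : ℕ} (ξ : Matrix (Fin n) (Fin n) ℝ) (i : Fin n) : ℝ :=
  Real.sqrt ((Matrix.isHermitian_mul_conjTranspose_self ξ).eigenvalues
    (Tuple.sort (Matrix.isHermitian_mul_conjTranspose_self ξ).eigenvalues i))

end

section Statements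

open Metric Set

/-!
Everything is built from one scalar function. Given a linear form `p ≠ 0` and `t ∈ [0, 1]`, let
`s` be a fine sawtooth whose gradient is `(1 - t) p` or `-t p`, and let `d` be a piecewise affine
bump with tiny gradient, supported in an open set `O` and positive on a large compact subset. Then
`φ = min s d` is small, vanishes outside `O`, and has the two sawtooth gradients except on a set
of small measure, where its gradient may be tiny. Choose `v` with `p v = 1`. The derivative of `φ`
along `v` has mean zero over `O` and equals `1 - t` or `-t` up to that small set, so the two
gradients occupy the fractions `t` and `1 - t` of `O`.

If `u` has gradient `B = t A₁ + (1 - t) A₂` on `O` and `A₁ - A₂ = a ⊗ p` has rank one, adding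
`φ a` to `u` splits `O` into two phases with gradients `A₁` and `A₂`; the remaining gradients stay
close to `B`, hence in any open set containing `B`. Starting from the affine map and undoing one
step of the recursion `(H_I(U))` at a time yields all the phases.
-/

section ConvexIntegration

open scoped NNReal Topology

section LocallyAffine

variable {E F : Type*} [NormedAddCommGroup E] [NormedSpace ℝ E]
  [NormedAddCommGroup F] [NormedSpace ℝ F] {u v : E → F} {A B : E →L[ℝ] F} {x : E}

/-- `u` coincides near `x` with an affine map of linear part `A`. -/
def LocallyAffineAt (u : E → F) (A : E →L[ℝ] F) (x : E) : Prop :=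
  ∃ b : F, u =ᶠ[𝓝 x] fun y => A y + b

theorem locallyAffineAt_affine (A : E →L[ℝ] F) (b : F) (x : E) :
    LocallyAffineAt (fun y => A y + b) A x :=
  ⟨b, EventuallyEq.rfl⟩

theorem isOpen_setOf_locallyAffineAt (u : E → F) (A : E →L[ℝ] F) :
    IsOpen {x | LocallyAffineAt u A x} := by
  simp only [LocallyAffineAt, ofPred_exists]
  exact isOpen_iUnion fun b => isOpen_setOfPred_eventually_nhds

namespace LocallyAffineAt

theorem congr (h : LocallyAffineAt u A x) (huv : v =ᶠ[𝓝 x] u) : LocallyAffineAt v A x :=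
  h.imp fun _ hb => huv.trans hb

theorem hasFDerivAt (h : LocallyAffineAt u A x) : HasFDerivAt u A x := by
  obtain ⟨b, hb⟩ := h
  exact (A.hasFDerivAt.add_const b).congr_of_eventuallyEq hb

theorem unique (hA : LocallyAffineAt u A x) (hB : LocallyAffineAt u B x) : A = B :=
  hA.hasFDerivAt.unique hB.hasFDerivAt

theorem disjoint (u : E → F) (hAB : A ≠ B) :
    Disjoint {x | LocallyAffineAt u A x} {x | LocallyAffineAt u B x} :=
  Set.disjoint_left.2 fun _ hA hB => hAB (hA.unique hB)

theorem lineDeriv (h : LocallyAffineAt u A x) (w : E) : lineDeriv ℝ u x w = A w :=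
  (h.hasFDerivAt.hasLineDerivAt w).lineDeriv

theorem add_smul_const (hu : LocallyAffineAt u A x) {φ : E → ℝ} {p : E →L[ℝ] ℝ}
    (hφ : LocallyAffineAt φ p x) (a : F) :
    LocallyAffineAt (fun y => u y + φ y • a) (A + p.smulRight a) x := by
  obtain ⟨b, hb⟩ := hu
  obtain ⟨c, hc⟩ := hφ
  refine ⟨b + c • a, ?_⟩
  filter_upwards [hb, hc] with y hby hcy
  simp only [hby, hcy, add_apply, ContinuousLinearMap.smulRight_apply]
  module

end LocallyAffineAt

/-- The open set on which `u` is locally given by the affine map `y ↦ α.1 y + α.2`; the nonempty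
cells are the pieces of a piecewise affine map. -/
def affineCell (u : E → F) (α : (E →L[ℝ] F) × F) : Set E :=
  {x | u =ᶠ[𝓝 x] fun y => α.1 y + α.2}

theorem isOpen_affineCell (u : E → F) (α : (E →L[ℝ] F) × F) : IsOpen (affineCell u α) :=
  isOpen_setOfPred_eventually_nhds

theorem pairwise_disjoint_affineCell (u : E → F) :
    Pairwise fun α β => Disjoint (affineCell u α) (affineCell u β) := by
  intro α β hαβ
  rw [Set.disjoint_left]
  intro x hα hβ
  have hlin : α.1 = β.1 := LocallyAffineAt.unique ⟨_, hα⟩ ⟨_, hβ⟩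
  have hval : α.1 x + α.2 = β.1 x + β.2 := hα.self_of_nhds.symm.trans hβ.self_of_nhds
  rw [hlin] at hval
  exact hαβ (Prod.ext hlin (add_left_cancel hval))

variable [FiniteDimensional ℝ E] [MeasurableSpace E] [BorelSpace E]
  {μ : Measure E} [μ.IsAddHaarMeasure]

theorem measure_setOf_clm_eq (hA : A ≠ 0) (c : F) : μ {x | A x = c} = 0 := by
  rcases eq_empty_or_nonempty {x | A x = c} with hempty | ⟨x₀, hx₀⟩
  · rw [hempty, measure_empty]
  have hfiber : {x | A x = c} = AffineSubspace.mk' x₀ A.ker := by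
    ext x
    simp [← hx₀.symm, sub_eq_zero]
  rw [hfiber]
  refine Measure.addHaar_affineSubspace μ _ fun htop => hA ?_
  have hker := congrArg AffineSubspace.direction htop
  rw [AffineSubspace.direction_mk', AffineSubspace.direction_top] at hker
  exact ContinuousLinearMap.coe_injective (LinearMap.ker_eq_top.1 hker)

theorem ae_eventuallyEq_or_ne (hu : ∀ᵐ x ∂μ, ∃ A, LocallyAffineAt u A x)
    (hv : ∀ᵐ x ∂μ, ∃ A, LocallyAffineAt v A x) : ∀ᵐ x ∂μ, u =ᶠ[𝓝 x] v ∨ u x ≠ v x := by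
  set s : Set E := {x | (∃ A, LocallyAffineAt u A x) ∧ (∃ A, LocallyAffineAt v A x) ∧
    u x = v x ∧ ¬ u =ᶠ[𝓝 x] v}
  have hs : μ s = 0 := by
    refine measure_null_of_locally_null s ?_
    rintro x ⟨⟨A, a, hA⟩, ⟨B, b, hB⟩, hx, hne⟩
    have hx' : A x + a = B x + b := hA.self_of_nhds.symm.trans (hx.trans hB.self_of_nhds)
    have hAB : A - B ≠ 0 := by
      rw [sub_ne_zero]
      rintro rfl
      obtain rfl := add_left_cancel hx'
      exact hne (hA.trans hB.symm)
    refine ⟨_, inter_mem self_mem_nhdsWithin (mem_nhdsWithin_of_mem_nhds (hA.and hB)),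
      measure_mono_null ?_ (measure_setOf_clm_eq hAB (b - a))⟩
    rintro y ⟨⟨-, -, hy, -⟩, hAy, hBy⟩
    have hy' : A y + a = B y + b := hAy.symm.trans (hy.trans hBy)
    rw [mem_ofPred_eq, sub_apply, sub_eq_sub_iff_add_eq_add, hy', add_comm]
  filter_upwards [hu, hv, measure_eq_zero_iff_ae_notMem.1 hs] with x hux hvx hxs
  by_contra! hcon
  exact hxs ⟨hux, hvx, hcon.2, hcon.1⟩

end LocallyAffine

section PiecewiseAffine

variable {E F : Type*} [NormedAddCommGroup E] [NormedSpace ℝ E] [MeasurableSpace E]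
  [NormedAddCommGroup F] [NormedSpace ℝ F] {μ : Measure E}

/-- `u` is Lipschitz and, near almost every point, affine with gradient in `S`. The affine pieces
are not recorded: they are open and disjoint, hence automatically countable in number. -/
structure PiecewiseAffineWith (μ : Measure E) (S : Set (E →L[ℝ] F)) (u : E → F) : Prop where
  lipschitz : ∃ C, LipschitzWith C u
  ae_locallyAffineAt : ∀ᵐ x ∂μ, ∃ A ∈ S, LocallyAffineAt u A x

theorem piecewiseAffineWith_affine {S : Set (E →L[ℝ] F)} {A : E →L[ℝ] F} (hA : A ∈ S) (b : F) :
    PiecewiseAffineWith μ S fun x => A x + b where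
  lipschitz := ⟨_, A.lipschitz.add (LipschitzWith.const b)⟩
  ae_locallyAffineAt := Eventually.of_forall fun x => ⟨A, hA, locallyAffineAt_affine A b x⟩

namespace PiecewiseAffineWith

variable {S T : Set (E →L[ℝ] F)} {u v w : E → F}

theorem mono (h : PiecewiseAffineWith μ S u) (hST : S ⊆ T) : PiecewiseAffineWith μ T u where
  lipschitz := h.lipschitz
  ae_locallyAffineAt := h.ae_locallyAffineAt.mono fun _ ⟨A, hA, hx⟩ => ⟨A, hST hA, hx⟩

theorem continuous (h : PiecewiseAffineWith μ S u) : Continuous u :=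
  h.lipschitz.elim fun _ hC => hC.continuous

theorem of_ae_eventuallyEq_or (hu : PiecewiseAffineWith μ S u) (hv : PiecewiseAffineWith μ S v)
    (hw : ∃ C, LipschitzWith C w) (h : ∀ᵐ x ∂μ, w =ᶠ[𝓝 x] u ∨ w =ᶠ[𝓝 x] v) :
    PiecewiseAffineWith μ S w where
  lipschitz := hw
  ae_locallyAffineAt := by
    filter_upwards [hu.ae_locallyAffineAt, hv.ae_locallyAffineAt, h]
      with x ⟨A, hA, hux⟩ ⟨B, hB, hvx⟩ hx
    exact hx.elim (fun hwu => ⟨A, hA, hux.congr hwu⟩) fun hwv => ⟨B, hB, hvx.congr hwv⟩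

theorem exists_seq_pieces [TopologicalSpace.SeparableSpace E] (h : PiecewiseAffineWith μ S u) :
    ∃ P : ℕ → Set E, (∀ k, IsOpen (P k)) ∧ Pairwise (Function.onFun Disjoint P) ∧
      μ (⋃ k, P k)ᶜ = 0 ∧ ∀ k, ∃ (A : E →L[ℝ] F) (b : F), ∀ x ∈ P k, u x = A x + b := by
  let cell : {α // (affineCell u α).Nonempty} → Set E := fun α => affineCell u α
  have hdisj : Pairwise (Function.onFun Disjoint cell) := fun α β hαβ =>
    pairwise_disjoint_affineCell u (Subtype.coe_ne_coe.2 hαβ)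
  have : Countable {α // (affineCell u α).Nonempty} :=
    hdisj.countable_of_isOpen_disjoint (fun α => isOpen_affineCell u α) fun α => α.2
  have := Encodable.ofCountable {α // (affineCell u α).Nonempty}
  refine ⟨fun k => ⋃ α ∈ Encodable.decode₂ _ k, cell α, fun k => ?_,
    Encodable.iUnion_decode₂_disjoint_on hdisj, ?_, fun k => ?_⟩
  · exact Encodable.iUnion_decode₂_cases (f := cell) (C := IsOpen) isOpen_empty
      fun α => isOpen_affineCell u α
  · rw [Encodable.iUnion_decode₂, measure_eq_zero_iff_ae_notMem]
    filter_upwards [h.ae_locallyAffineAt] with x ⟨A, _, b, hx⟩ hcon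
    exact hcon (mem_iUnion.2 ⟨⟨(A, b), x, hx⟩, hx⟩)
  · exact Encodable.iUnion_decode₂_cases (f := cell)
      (C := fun s => ∃ (A : E →L[ℝ] F) (b : F), ∀ x ∈ s, u x = A x + b)
      ⟨0, 0, fun _ => False.elim⟩ fun α => ⟨α.1.1, α.1.2, fun x hx => hx.self_of_nhds⟩

end PiecewiseAffineWith

namespace PiecewiseAffineWith

variable [FiniteDimensional ℝ E] [BorelSpace E] [μ.IsAddHaarMeasure]
  {S : Set (E →L[ℝ] ℝ)} {f g : E → ℝ}

theorem ae_eventuallyEq_or_lt_or_gt (hf : PiecewiseAffineWith μ S f)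
    (hg : PiecewiseAffineWith μ S g) :
    ∀ᵐ x ∂μ, f =ᶠ[𝓝 x] g ∨ (∀ᶠ y in 𝓝 x, f y < g y) ∨ ∀ᶠ y in 𝓝 x, g y < f y := by
  have hf' := hf.ae_locallyAffineAt.mono fun _ ⟨A, _, hx⟩ => Exists.intro A hx
  have hg' := hg.ae_locallyAffineAt.mono fun _ ⟨A, _, hx⟩ => Exists.intro A hx
  filter_upwards [ae_eventuallyEq_or_ne hf' hg'] with x hx
  exact hx.imp_right fun hne => (lt_or_gt_of_ne hne).imp
    (hf.continuous.continuousAt.eventually_lt hg.continuous.continuousAt)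
    (hg.continuous.continuousAt.eventually_lt hf.continuous.continuousAt)

theorem min (hf : PiecewiseAffineWith μ S f) (hg : PiecewiseAffineWith μ S g) :
    PiecewiseAffineWith μ S fun x => min (f x) (g x) := by
  obtain ⟨C, hC⟩ := hf.lipschitz
  obtain ⟨D, hD⟩ := hg.lipschitz
  refine hf.of_ae_eventuallyEq_or hg ⟨_, hC.min hD⟩ ?_
  filter_upwards [hf.ae_eventuallyEq_or_lt_or_gt hg] with x hx
  rcases hx with heq | hlt | hgt
  · exact Or.inl (heq.mono fun y hy => min_eq_left hy.le)
  · exact Or.inl (hlt.mono fun y hy => min_eq_left hy.le)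
  · exact Or.inr (hgt.mono fun y hy => min_eq_right hy.le)

theorem max (hf : PiecewiseAffineWith μ S f) (hg : PiecewiseAffineWith μ S g) :
    PiecewiseAffineWith μ S fun x => max (f x) (g x) := by
  obtain ⟨C, hC⟩ := hf.lipschitz
  obtain ⟨D, hD⟩ := hg.lipschitz
  refine hf.of_ae_eventuallyEq_or hg ⟨_, hC.max hD⟩ ?_
  filter_upwards [hf.ae_eventuallyEq_or_lt_or_gt hg] with x hx
  rcases hx with heq | hlt | hgt
  · exact Or.inl (heq.mono fun y hy => max_eq_left hy.ge)
  · exact Or.inr (hlt.mono fun y hy => max_eq_right hy.le)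
  · exact Or.inl (hgt.mono fun y hy => max_eq_left hy.le)

theorem finset_inf' {ι : Type*} {s : Finset ι} (hs : s.Nonempty) {f : ι → E → ℝ}
    (hf : ∀ i ∈ s, PiecewiseAffineWith μ S (f i)) :
    PiecewiseAffineWith μ S fun x => s.inf' hs fun i => f i x := by
  have h := Finset.inf'_induction (p := PiecewiseAffineWith μ S) hs f
    (fun _ hg _ hh => hg.min hh) hf
  convert h using 1
  ext x
  rw [Finset.inf'_apply]

end PiecewiseAffineWith

end PiecewiseAffine

section ScalarPerturbation

variable {E : Type*} [NormedAddCommGroup E] [NormedSpace ℝ E] [FiniteDimensional ℝ E]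

theorem exists_finset_forall_exists_le_neg_mul_norm {W : Set (E →L[ℝ] ℝ)} (hW : W ∈ 𝓝 0) :
    ∃ T : Finset (E →L[ℝ] ℝ), ↑T ⊆ W ∧ ∃ κ > 0, ∀ x, ∃ q ∈ T, q x ≤ -(κ * ‖x‖) := by
  obtain ⟨ρ, hρ, hρW⟩ := nhds_basis_closedBall.mem_iff.1 hW
  have hdual : ∀ x ∈ sphere (0 : E) 1, ∃ q ∈ W, q x = -ρ := fun x hx => by
    rw [mem_sphere_zero_iff_norm] at hx
    obtain ⟨f, hf, hfx⟩ := exists_dual_vector ℝ x (hx.trans_ne one_ne_zero)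
    refine ⟨-ρ • f, hρW ?_, ?_⟩
    · rw [mem_closedBall_zero_iff, norm_smul, hf, norm_neg, Real.norm_of_nonneg hρ.le, mul_one]
    · rw [smul_apply, hfx, hx, RCLike.ofReal_one, smul_eq_mul, mul_one]
  choose! q hqW hq using hdual
  obtain ⟨F, hFS, hcover⟩ := (isCompact_sphere (0 : E) 1).elim_nhds_subcover
    (fun x => {y | q x y < -(ρ / 2)}) fun x hx =>
      (q x).continuous.continuousAt.eventually_lt_const (by linarith [hq x hx])
  refine ⟨insert 0 (F.image q), ?_, ρ / 2, half_pos hρ, fun x => ?_⟩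
  · rw [Finset.coe_insert, Finset.coe_image, insert_subset_iff]
    exact ⟨mem_of_mem_nhds hW, image_subset_iff.2 fun y hy => hqW y (hFS y hy)⟩
  rcases eq_or_ne x 0 with rfl | hx
  · exact ⟨0, Finset.mem_insert_self _ _, by simp⟩
  have hnorm : 0 < ‖x‖ := norm_pos_iff.2 hx
  obtain ⟨y, hyF, hy⟩ := mem_iUnion₂.1
    (hcover (mem_sphere_zero_iff_norm.2 (norm_smul_inv_norm (𝕜 := ℝ) hx)))
  refine ⟨q y, Finset.mem_insert_of_mem (Finset.mem_image_of_mem q hyF), ?_⟩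
  have hlt : ‖x‖⁻¹ * q y x < -(ρ / 2) := by simpa using hy
  rw [inv_mul_lt_iff₀ hnorm] at hlt
  linarith

variable [MeasurableSpace E] [BorelSpace E] {μ : Measure E} [μ.IsAddHaarMeasure]

theorem exists_cutoff_of_mem {W : Set (E →L[ℝ] ℝ)} (hW : W ∈ 𝓝 0) {O : Set E} (hO : IsOpen O)
    {c : E} (hc : c ∈ O) :
    ∃ d : E → ℝ, PiecewiseAffineWith μ W d ∧ (∀ x, 0 ≤ d x) ∧ HasCompactSupport d ∧
      tsupport d ⊆ O ∧ 0 < d c := by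
  obtain ⟨T, hTW, κ, hκ, hT⟩ := exists_finset_forall_exists_le_neg_mul_norm hW
  obtain ⟨r, hr, hrO⟩ := nhds_basis_closedBall.mem_iff.1 (hO.mem_nhds hc)
  have hne : T.Nonempty := (hT 0).imp fun _ => And.left
  set d : E → ℝ := fun x => max 0 (T.inf' hne fun q => q (x - c) + κ * r)
  have hzero : ∀ x ∉ closedBall c r, d x = 0 := fun x hx => by
    rw [mem_closedBall, not_le, dist_eq_norm] at hx
    obtain ⟨q, hq, hqx⟩ := hT (x - c)
    refine max_eq_left ((Finset.inf'_le _ hq).trans ?_)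
    nlinarith
  refine ⟨d, ?_, fun x => le_max_left _ _, .intro (isCompact_closedBall c r) hzero, ?_, ?_⟩
  · refine PiecewiseAffineWith.max ?_ (PiecewiseAffineWith.finset_inf' hne fun q hq => ?_)
    · simpa using piecewiseAffineWith_affine (μ := μ) (mem_of_mem_nhds hW) (0 : ℝ)
    · convert piecewiseAffineWith_affine (μ := μ) (hTW hq) (κ * r - q c) using 2
      rw [map_sub]
      ring
  · refine (closure_minimal (fun x hx => ?_) isClosed_closedBall).trans hrO
    exact not_imp_comm.1 (hzero x) hx
  · simp only [d, sub_self, map_zero, zero_add, Finset.inf'_const]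
    exact lt_max_of_lt_right (mul_pos hκ hr)

theorem exists_cutoff {W : Set (E →L[ℝ] ℝ)} (hW : W ∈ 𝓝 0) {O K : Set E} (hO : IsOpen O)
    (hK : IsCompact K) (hKO : K ⊆ O) :
    ∃ d : E → ℝ, PiecewiseAffineWith μ W d ∧ (∀ x, 0 ≤ d x) ∧ HasCompactSupport d ∧
      tsupport d ⊆ O ∧ ∀ x ∈ K, 0 < d x := by
  refine hK.induction_on
    (p := fun K => ∃ d : E → ℝ, PiecewiseAffineWith μ W d ∧ (∀ x, 0 ≤ d x) ∧
      HasCompactSupport d ∧ tsupport d ⊆ O ∧ ∀ x ∈ K, 0 < d x) ?_ ?_ ?_ fun c hc => ?_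
  · have hzero := piecewiseAffineWith_affine (μ := μ) (mem_of_mem_nhds hW) (0 : ℝ)
    simp only [zero_apply, add_zero] at hzero
    exact ⟨_, hzero, fun _ => le_rfl, .zero, by simp, fun _ => False.elim⟩
  · rintro K L hKL ⟨d, hdW, hd0, hdc, hdO, hdL⟩
    exact ⟨d, hdW, hd0, hdc, hdO, fun x hx => hdL x (hKL hx)⟩
  · rintro K L ⟨d, hdW, hd0, hdc, hdO, hdK⟩ ⟨e, heW, -, hec, heO, heL⟩
    have hsupp : tsupport (fun x => max (d x) (e x)) ⊆ tsupport d ∪ tsupport e := by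
      rw [tsupport, tsupport, tsupport, ← closure_union]
      exact closure_mono (Function.support_max d e)
    refine ⟨_, hdW.max heW, fun x => le_max_of_le_left (hd0 x),
      (hdc.isCompact.union hec.isCompact).of_isClosed_subset isClosed_closure hsupp,
      hsupp.trans (union_subset hdO heO), ?_⟩
    rintro x (hx | hx)
    exacts [lt_max_of_lt_left (hdK x hx), lt_max_of_lt_right (heL x hx)]
  · obtain ⟨d, hdW, hd0, hdc, hdO, hdpos⟩ := exists_cutoff_of_mem (μ := μ) hW hO (hKO hc)
    have hnhds : {x | 0 < d x} ∈ 𝓝 c :=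
      hdW.continuous.continuousAt.eventually_const_lt hdpos
    exact ⟨_, mem_nhdsWithin_of_mem_nhds hnhds, d, hdW, hd0, hdc, hdO, fun _ => id⟩

theorem exists_sawtooth (p : E →L[ℝ] ℝ) {t : ℝ} (ht : t ∈ Icc (0 : ℝ) 1) {K : Set E}
    (hK : Bornology.IsBounded K) {δ : ℝ} (hδ : 0 < δ) :
    ∃ s : E → ℝ, PiecewiseAffineWith μ {(1 - t) • p, -t • p} s ∧ (∀ x, 0 ≤ s x) ∧
      ∀ x ∈ K, s x ≤ δ := by
  obtain ⟨R, hR, hKR⟩ := (hK.image p).exists_pos_norm_le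
  set J : Finset ℤ := Finset.Icc ⌊-R / δ⌋ ⌊R / δ⌋
  have hJ : J.Nonempty := Finset.nonempty_Icc.2 (Int.floor_mono (by gcongr; linarith))
  set tooth : ℤ → E → ℝ := fun j x => max ((1 - t) * (p x - δ * j)) (-t * (p x - δ * j))
  refine ⟨fun x => J.inf' hJ fun j => tooth j x, .finset_inf' hJ fun j _ => .max ?_ ?_,
    fun x => Finset.le_inf' _ _ fun j _ => ?_, fun x hx => ?_⟩
  · convert piecewiseAffineWith_affine (μ := μ) (S := {(1 - t) • p, -t • p})
      (mem_insert _ _) (-((1 - t) * (δ * j))) using 2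
    rw [smul_apply, smul_eq_mul]
    ring
  · convert piecewiseAffineWith_affine (μ := μ) (S := {(1 - t) • p, -t • p})
      (mem_insert_of_mem _ rfl) (t * (δ * j)) using 2
    rw [smul_apply, smul_eq_mul]
    ring
  · rw [le_max_iff]
    rcases le_total 0 (p x - δ * j) with h | h
    · exact Or.inl (mul_nonneg (sub_nonneg.2 ht.2) h)
    · exact Or.inr (mul_nonneg_of_nonpos_of_nonpos (neg_nonpos.2 ht.1) h)
  · have hpx := abs_le.1 (hKR _ (mem_image_of_mem p hx))
    have hj : ⌊p x / δ⌋ ∈ J := Finset.mem_Icc.2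
      ⟨Int.floor_mono (by gcongr; exact hpx.1), Int.floor_mono (by gcongr; exact hpx.2)⟩
    have hlow : δ * ⌊p x / δ⌋ ≤ p x := (le_div_iff₀' hδ).1 (Int.floor_le _)
    have hupp : p x < δ * (⌊p x / δ⌋ + 1) := (div_lt_iff₀' hδ).1 (Int.lt_floor_add_one _)
    refine (Finset.inf'_le _ hj).trans (max_le ?_ ?_)
    · nlinarith [ht.1, ht.2]
    · nlinarith [ht.1, ht.2]

theorem exists_perturbation (p : E →L[ℝ] ℝ) {t : ℝ} (ht : t ∈ Icc (0 : ℝ) 1)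
    {W : Set (E →L[ℝ] ℝ)} (hW : W ∈ 𝓝 0) {O K : Set E} (hO : IsOpen O) (hK : IsCompact K)
    (hKO : K ⊆ O) {δ : ℝ} (hδ : 0 < δ) :
    ∃ φ : E → ℝ, PiecewiseAffineWith μ ({(1 - t) • p, -t • p} ∪ W) φ ∧ (∀ x, |φ x| ≤ δ) ∧
      HasCompactSupport φ ∧ tsupport φ ⊆ O ∧
      ∀ᵐ x ∂μ, x ∈ K → LocallyAffineAt φ ((1 - t) • p) x ∨ LocallyAffineAt φ (-t • p) x := by
  obtain ⟨d, hdW, hd0, hdc, hdO, hdK⟩ := exists_cutoff (μ := μ) hW hO hK hKO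
  obtain ⟨θ, hθ, hθK⟩ := hK.exists_forall_le' hdW.continuous.continuousOn hdK
  obtain ⟨s, hs, hs0, hsd⟩ := exists_sawtooth (μ := μ) p ht hdc.isCompact.isBounded
    (lt_min hδ (half_pos hθ))
  have hsupp : tsupport (fun x => min (s x) (d x)) ⊆ tsupport d :=
    closure_mono fun x hx hdx => hx (by simp only [hdx, min_eq_right (hs0 x)])
  refine ⟨fun x => min (s x) (d x), (hs.mono subset_union_left).min (hdW.mono subset_union_right),
    fun x => ?_, hdc.of_isClosed_subset isClosed_closure hsupp, hsupp.trans hdO, ?_⟩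
  · rw [abs_of_nonneg (le_min (hs0 x) (hd0 x))]
    by_cases hx : x ∈ tsupport d
    · exact (min_le_left _ _).trans ((hsd x hx).trans (min_le_left _ _))
    · exact (min_le_right _ _).trans ((image_eq_zero_of_notMem_tsupport hx).trans_le hδ.le)
  · filter_upwards [hs.ae_locallyAffineAt] with x ⟨A, hA, hsA⟩ hxK
    have hlt : s x < d x := by
      have hx : x ∈ tsupport d := subset_tsupport d (hdK x hxK).ne'
      linarith [hsd x hx, min_le_right δ (θ / 2), hθK x hxK]
    have hφA : LocallyAffineAt (fun x => min (s x) (d x)) A x := by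
      refine hsA.congr ?_
      filter_upwards [hs.continuous.continuousAt.eventually_lt hdW.continuous.continuousAt hlt]
        with y hy using min_eq_left hy.le
    rcases hA with rfl | rfl
    exacts [Or.inl hφA, Or.inr hφA]

theorem integral_lineDeriv_eq_zero {φ : E → ℝ} {C : ℝ≥0} (hφ : LipschitzWith C φ)
    (hc : HasCompactSupport φ) (v : E) : ∫ x, lineDeriv ℝ φ x v ∂μ = 0 := by
  simpa [lineDeriv] using (LipschitzWith.integral_lineDeriv_mul_eq (μ := μ)
    (LipschitzWith.const (1 : ℝ)) hφ hc (-v)).symm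

theorem setIntegral_lineDeriv_eq_zero {φ : E → ℝ} {C : ℝ≥0} (hφ : LipschitzWith C φ)
    (hc : HasCompactSupport φ) {O : Set E} (hO : tsupport φ ⊆ O) (v : E) :
    ∫ x in O, lineDeriv ℝ φ x v ∂μ = 0 := by
  rw [setIntegral_eq_integral_of_forall_compl_eq_zero, integral_lineDeriv_eq_zero hφ hc]
  intro x hx
  have hzero : φ =ᶠ[𝓝 x] 0 := notMem_tsupport_iff_eventuallyEq.1 fun h => hx (hO h)
  have hφx : LocallyAffineAt φ 0 x := ⟨0, hzero.mono fun y hy => by simpa using hy⟩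
  exact hφx.lineDeriv v

theorem abs_measureReal_sub_mul_le {φ : E → ℝ} {C : ℝ≥0} (hφ : LipschitzWith C φ)
    (hc : HasCompactSupport φ) {O P Q : Set E} (hOfin : μ O ≠ ⊤)
    (hφO : tsupport φ ⊆ O) (hP : MeasurableSet P) (hQ : MeasurableSet Q) (hPO : P ⊆ O)
    (hQO : Q ⊆ O) (hPQ : Disjoint P Q) {v : E} {t : ℝ} (ht : |t| ≤ 1)
    (hφP : ∀ x ∈ P, lineDeriv ℝ φ x v = 1 - t) (hφQ : ∀ x ∈ Q, lineDeriv ℝ φ x v = -t)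
    (hφv : ∀ᵐ x ∂μ, |lineDeriv ℝ φ x v| ≤ 1) :
    |μ.real P - t * μ.real O| ≤ 2 * μ.real (O \ (P ∪ Q)) := by
  set g : E → ℝ := fun x => lineDeriv ℝ φ x v + t
  have hgbound : ∀ᵐ x ∂μ, ‖g x‖ ≤ 2 := by
    filter_upwards [hφv] with x hx
    exact (abs_add_le _ _).trans (by linarith)
  have hDint : IntegrableOn (fun x => lineDeriv ℝ φ x v) O μ :=
    Measure.integrableOn_of_bounded hOfin
      (measurable_lineDeriv hφ.continuous).aestronglyMeasurable (ae_restrict_of_ae hφv)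
  have hgint : IntegrableOn g O μ := hDint.add (integrableOn_const hOfin)
  have hgO : ∫ x in O, g x ∂μ = t * μ.real O := by
    rw [integral_add hDint (integrableOn_const hOfin), setIntegral_lineDeriv_eq_zero hφ hc hφO,
      setIntegral_const, zero_add, smul_eq_mul, mul_comm]
  have hgP : ∫ x in P, g x ∂μ = μ.real P := by
    rw [setIntegral_congr_fun (g := fun _ => (1 : ℝ)) hP fun x hx => by simp [g, hφP x hx]]
    simp
  have hgQ : ∫ x in Q, g x ∂μ = 0 :=
    setIntegral_eq_zero_of_forall_eq_zero fun x hx => by simp [g, hφQ x hx]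
  have hsplit := setIntegral_sdiff (hP.union hQ) hgint (union_subset hPO hQO)
  rw [setIntegral_union hPQ hQ (hgint.mono_set hPO) (hgint.mono_set hQO), hgP, hgQ, hgO,
    add_zero] at hsplit
  rw [abs_sub_comm, ← hsplit]
  exact norm_setIntegral_le_of_norm_le_const_ae
    ((measure_mono sdiff_subset).trans_lt hOfin.lt_top) (ae_restrict_of_ae hgbound)

theorem PiecewiseAffineWith.abs_measureReal_locallyAffineAt_sub_le {S : Set (E →L[ℝ] ℝ)}
    {φ : E → ℝ} (hφ : PiecewiseAffineWith μ S φ) (hc : HasCompactSupport φ) {O : Set E}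
    (hO : IsOpen O) (hOfin : μ O ≠ ⊤) (hφO : tsupport φ ⊆ O) {v : E} (hS : ∀ A ∈ S, |A v| ≤ 1)
    {t : ℝ} (ht : |t| ≤ 1) {A B : E →L[ℝ] ℝ} (hA : A v = 1 - t) (hB : B v = -t) :
    |μ.real (O ∩ {x | LocallyAffineAt φ A x}) - t * μ.real O| ≤
      2 * μ.real (O \ {x | LocallyAffineAt φ A x ∨ LocallyAffineAt φ B x}) := by
  obtain ⟨C, hC⟩ := hφ.lipschitz
  have hmeas (D : E →L[ℝ] ℝ) : MeasurableSet (O ∩ {x | LocallyAffineAt φ D x}) :=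
    (hO.inter (isOpen_setOf_locallyAffineAt φ D)).measurableSet
  have hAB : A ≠ B := ne_of_apply_ne (· v) (by simp only [hA, hB]; linarith)
  have hφv : ∀ᵐ x ∂μ, |lineDeriv ℝ φ x v| ≤ 1 := by
    filter_upwards [hφ.ae_locallyAffineAt] with x ⟨D, hD, hφD⟩
    exact hφD.lineDeriv v ▸ hS D hD
  have key := abs_measureReal_sub_mul_le hC hc hOfin hφO (hmeas A) (hmeas B) inter_subset_left
    inter_subset_left ((LocallyAffineAt.disjoint φ hAB).mono inter_subset_right inter_subset_right)
    ht (fun x hx => (hx.2.lineDeriv v).trans hA)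
    (fun x hx => (hx.2.lineDeriv v).trans hB) hφv
  rwa [← inter_union_distrib_left, sdiff_self_inter] at key

theorem exists_perturbation_measureReal {p : E →L[ℝ] ℝ} (hp : p ≠ 0) {t : ℝ}
    (ht : t ∈ Icc (0 : ℝ) 1) {W : Set (E →L[ℝ] ℝ)} (hW : W ∈ 𝓝 0) {O : Set E} (hO : IsOpen O)
    (hOfin : μ O ≠ ⊤) {δ : ℝ} (hδ : 0 < δ) :
    ∃ φ : E → ℝ, PiecewiseAffineWith μ ({(1 - t) • p, -t • p} ∪ W) φ ∧ (∀ x, |φ x| ≤ δ) ∧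
      tsupport φ ⊆ O ∧
      |μ.real (O ∩ {x | LocallyAffineAt φ ((1 - t) • p) x}) - t * μ.real O| ≤ δ ∧
      |μ.real (O ∩ {x | LocallyAffineAt φ (-t • p) x}) - (1 - t) * μ.real O| ≤ δ := by
  obtain ⟨x₀, hx₀⟩ := DFunLike.ne_iff.1 hp
  obtain ⟨v, hv⟩ : ∃ v, p v = 1 := ⟨(p x₀)⁻¹ • x₀, by simpa using inv_mul_cancel₀ hx₀⟩
  have hWv : W ∩ {A | |A v| < 1} ∈ 𝓝 0 := inter_mem hW <| by
    have hcont : Continuous fun A : E →L[ℝ] ℝ => |A v| := by fun_prop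
    exact hcont.continuousAt.eventually_lt_const (by simp)
  have htabs : |t| ≤ 1 ∧ |1 - t| ≤ 1 := by
    constructor <;> rw [abs_le] <;> constructor <;> linarith [ht.1, ht.2]
  have hgrad : ∀ A ∈ {(1 - t) • p, -t • p} ∪ W ∩ {A | |A v| < 1}, |A v| ≤ 1 := by
    rintro A ((rfl | rfl) | ⟨-, hA⟩)
    exacts [by simpa [hv] using htabs.2, by simpa [hv] using htabs.1, hA.le]
  obtain ⟨K, hKO, hK, hOK⟩ := hO.measurableSet.exists_isCompact_sdiff_lt hOfin
    (ENNReal.ofReal_pos.2 (half_pos hδ)).ne'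
  obtain ⟨φ, hφ, hφδ, hφc, hφO, hφK⟩ := exists_perturbation (μ := μ) p ht hWv hO hK hKO hδ
  have hrest : μ.real (O \ {x | LocallyAffineAt φ ((1 - t) • p) x ∨
      LocallyAffineAt φ (-t • p) x}) ≤ δ / 2 := by
    refine ENNReal.toReal_le_of_le_ofReal (half_pos hδ).le ((measure_mono_ae ?_).trans hOK.le)
    filter_upwards [hφK] with x hx hxO using ⟨hxO.1, fun hxK => hxO.2 (hx hxK)⟩
  refine ⟨φ, hφ.mono (union_subset_union_right _ inter_subset_left), hφδ, hφO, ?_, ?_⟩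
  · refine (hφ.abs_measureReal_locallyAffineAt_sub_le hφc hO hOfin hφO hgrad htabs.1
      (B := -t • p) ?_ ?_).trans (by linarith) <;> simp [hv]
  · -- The direction `-v` exchanges the two slopes.
    simp only [or_comm (a := LocallyAffineAt φ ((1 - t) • p) _)] at hrest
    refine (hφ.abs_measureReal_locallyAffineAt_sub_le hφc hO hOfin hφO (v := -v) ?_ htabs.2
      (B := (1 - t) • p) ?_ ?_).trans (by linarith)
    · simpa using hgrad
    all_goals simp [hv]

end ScalarPerturbation

section Laminate

variable {E F : Type*} [NormedAddCommGroup E] [NormedSpace ℝ E] [MeasurableSpace E]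
  [NormedAddCommGroup F] [NormedSpace ℝ F] {μ : Measure E} {V : Set (E →L[ℝ] F)} {u w : E → F}

theorem PiecewiseAffineWith.add_smul_const (hu : PiecewiseAffineWith μ V u) {O : Set E}
    {B : E →L[ℝ] F} (huO : ∀ x ∈ O, LocallyAffineAt u B x) {S : Set (E →L[ℝ] ℝ)} {φ : E → ℝ}
    (hφ : PiecewiseAffineWith μ S φ) (hφO : tsupport φ ⊆ O) {a : F}
    (hS : ∀ q ∈ S, B + q.smulRight a ∈ V) : PiecewiseAffineWith μ V fun x => u x + φ x • a where
  lipschitz := by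
    obtain ⟨C, hC⟩ := hu.lipschitz
    obtain ⟨D, hD⟩ := hφ.lipschitz
    exact ⟨_, hC.add ((ContinuousLinearMap.toSpanSingleton ℝ a).lipschitz.comp hD)⟩
  ae_locallyAffineAt := by
    filter_upwards [hu.ae_locallyAffineAt, hφ.ae_locallyAffineAt] with x ⟨A, hA, hux⟩ ⟨q, hq, hφx⟩
    by_cases hx : x ∈ O
    · exact ⟨_, hS q hq, (huO x hx).add_smul_const hφx a⟩
    · have hzero : φ =ᶠ[𝓝 x] 0 := notMem_tsupport_iff_eventuallyEq.1 fun h => hx (hφO h)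
      exact ⟨A, hA, hux.congr (hzero.mono fun y hy => by simp [hy])⟩

/-- `O` is a phase of `u` in `Ω` with gradient `A` and volume fraction `l`, up to the error `ε`
in the volume. -/
structure IsPhase (μ : Measure E) (Ω : Set E) (ε : ℝ) (u : E → F) (l : ℝ) (A : E →L[ℝ] F)
    (O : Set E) : Prop where
  isOpen : IsOpen O
  subset : O ⊆ Ω
  locallyAffineAt : ∀ x ∈ O, LocallyAffineAt u A x
  abs_measureReal_sub_le : |μ.real O - l * μ.real Ω| ≤ ε

namespace IsPhase

variable {Ω O P : Set E} {ε δ l t : ℝ} {A B : E →L[ℝ] F}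

theorem congr (h : IsPhase μ Ω ε u l A O) (huw : ∀ x ∈ O, w =ᶠ[𝓝 x] u) (hεδ : ε ≤ δ) :
    IsPhase μ Ω δ w l A O where
  isOpen := h.isOpen
  subset := h.subset
  locallyAffineAt x hx := (h.locallyAffineAt x hx).congr (huw x hx)
  abs_measureReal_sub_le := h.abs_measureReal_sub_le.trans hεδ

theorem trans (h : IsPhase μ Ω ε u l B O) (h' : IsPhase μ O δ w t A P) (ht : t ∈ Icc (0 : ℝ) 1) :
    IsPhase μ Ω (ε + δ) w (t * l) A P where
  isOpen := h'.isOpen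
  subset := h'.subset.trans h.subset
  locallyAffineAt := h'.locallyAffineAt
  abs_measureReal_sub_le := calc
    |μ.real P - t * l * μ.real Ω|
    _ = |t * (μ.real O - l * μ.real Ω) + (μ.real P - t * μ.real O)| := by ring_nf
    _ ≤ t * |μ.real O - l * μ.real Ω| + |μ.real P - t * μ.real O| := by
      rw [← abs_of_nonneg ht.1, ← abs_mul, abs_of_nonneg ht.1]
      exact abs_add_le _ _
    _ ≤ 1 * ε + δ := by
      gcongr
      exacts [ht.2, h.abs_measureReal_sub_le, h'.abs_measureReal_sub_le]
    _ = ε + δ := by rw [one_mul]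

end IsPhase

/-- `u` realises the laminate `L`, a list of weighted gradients, in `Ω` up to the error `ε`: it is a
piecewise affine perturbation of `w` supported in `Ω`, with gradients in `V`, whose disjoint phases
`Os` carry the gradients of `L` with their weights as volume fractions. -/
structure IsLaminateApprox (μ : Measure E) (V : Set (E →L[ℝ] F)) (Ω : Set E) (w : E → F) (ε : ℝ)
    (u : E → F) (L : List (ℝ × (E →L[ℝ] F))) (Os : List (Set E)) : Prop where
  piecewiseAffineWith : PiecewiseAffineWith μ V u
  eqOn_compl : EqOn u w Ωᶜ
  norm_sub_le : ∀ x, ‖u x - w x‖ ≤ ε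
  phases : L.Forall₂ (fun α O => IsPhase μ Ω ε u α.1 α.2 O) Os
  pairwise_disjoint : Os.Pairwise Disjoint

namespace IsLaminateApprox

variable {Ω : Set E} {ε : ℝ} {L : List (ℝ × (E →L[ℝ] F))} {Os : List (Set E)}

theorem single (hΩ : IsOpen Ω) {A : E →L[ℝ] F} (hA : A ∈ V) (b : F) (hε : 0 ≤ ε) :
    IsLaminateApprox μ V Ω (fun x => A x + b) ε (fun x => A x + b) [(1, A)] [Ω] where
  piecewiseAffineWith := piecewiseAffineWith_affine hA b
  eqOn_compl _ _ := rfl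
  norm_sub_le x := by simpa using hε
  phases := .cons ⟨hΩ, subset_rfl, fun x _ => locallyAffineAt_affine A b x, by simpa using hε⟩ .nil
  pairwise_disjoint := List.pairwise_singleton _ _

theorem perm (h : IsLaminateApprox μ V Ω w ε u L Os) {L' : List (ℝ × (E →L[ℝ] F))}
    (hL : L'.Perm L) : ∃ Os', IsLaminateApprox μ V Ω w ε u L' Os' := by
  obtain ⟨Os', hphases, hOs⟩ := List.perm_comp_forall₂ hL h.phases
  exact ⟨Os', h.piecewiseAffineWith, h.eqOn_compl, h.norm_sub_le, hphases,
    h.pairwise_disjoint.perm hOs.symm fun h => h.symm⟩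

end IsLaminateApprox

variable [FiniteDimensional ℝ E] [BorelSpace E] [μ.IsAddHaarMeasure]

theorem PiecewiseAffineWith.exists_rankOne_split (hu : PiecewiseAffineWith μ V u) (hV : IsOpen V)
    {A₁ A₂ : E →L[ℝ] F} (hA₁ : A₁ ∈ V) (hA₂ : A₂ ∈ V) {p : E →L[ℝ] ℝ} (hp : p ≠ 0) {a : F}
    (hpa : A₁ - A₂ = p.smulRight a) {t : ℝ} (ht : t ∈ Icc (0 : ℝ) 1)
    (hB : t • A₁ + (1 - t) • A₂ ∈ V) {O : Set E} (hO : IsOpen O) (hOfin : μ O ≠ ⊤)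
    (huO : ∀ x ∈ O, LocallyAffineAt u (t • A₁ + (1 - t) • A₂) x) {δ : ℝ} (hδ : 0 < δ) :
    ∃ (u' : E → F) (O₁ O₂ : Set E), PiecewiseAffineWith μ V u' ∧ (∀ x ∉ O, u' =ᶠ[𝓝 x] u) ∧
      (∀ x, ‖u' x - u x‖ ≤ δ) ∧
      IsPhase μ O δ u' t A₁ O₁ ∧ IsPhase μ O δ u' (1 - t) A₂ O₂ ∧ Disjoint O₁ O₂ := by
  set B := t • A₁ + (1 - t) • A₂
  have hsmul (c : ℝ) : (c • p).smulRight a = c • (A₁ - A₂) := by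
    ext x
    simp [hpa, mul_smul]
  have hB₁ : B + ((1 - t) • p).smulRight a = A₁ := by
    rw [hsmul]
    module
  have hB₂ : B + (-t • p).smulRight a = A₂ := by
    rw [hsmul]
    module
  have hW : {q : E →L[ℝ] ℝ | B + q.smulRight a ∈ V} ∈ 𝓝 0 := by
    have hcont : Continuous fun q : E →L[ℝ] ℝ => B + q.smulRight a := by fun_prop
    exact hcont.continuousAt.preimage_mem_nhds (hV.mem_nhds (by simpa using hB))
  have hpp : (1 - t) • p ≠ -t • p := fun h => hp <| calc
    p = (1 - t) • p - -t • p := by module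
    _ = 0 := sub_eq_zero.2 h
  have hδa : 0 < δ / (‖a‖ + 1) := by positivity
  have hδ' : δ / (‖a‖ + 1) ≤ δ := div_le_self hδ.le (by linarith [norm_nonneg a])
  obtain ⟨φ, hφ, hφδ, hφO, hφ₁, hφ₂⟩ := exists_perturbation_measureReal hp ht hW hO hOfin hδa
  have hopen (q : E →L[ℝ] ℝ) : IsOpen (O ∩ {x | LocallyAffineAt φ q x}) :=
    hO.inter (isOpen_setOf_locallyAffineAt φ q)
  refine ⟨fun x => u x + φ x • a, _, _, hu.add_smul_const huO hφ hφO ?_, fun x hx => ?_,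
    fun x => ?_, ⟨hopen _, inter_subset_left, fun x hx => ?_, hφ₁.trans hδ'⟩,
    ⟨hopen _, inter_subset_left, fun x hx => ?_, hφ₂.trans hδ'⟩,
    (LocallyAffineAt.disjoint φ hpp).mono inter_subset_right inter_subset_right⟩
  · rintro q ((rfl | rfl) | hq)
    exacts [hB₁.symm ▸ hA₁, hB₂.symm ▸ hA₂, hq]
  · exact (notMem_tsupport_iff_eventuallyEq.1 fun h => hx (hφO h)).mono fun y hy => by simp [hy]
  · rw [add_sub_cancel_left, norm_smul, Real.norm_eq_abs]
    nlinarith [abs_nonneg (φ x), (le_div_iff₀ (by positivity)).1 (hφδ x)]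
  · exact hB₁ ▸ (huO x hx.1).add_smul_const hx.2 a
  · exact hB₂ ▸ (huO x hx.1).add_smul_const hx.2 a

namespace IsLaminateApprox

variable {Ω : Set E} {ε δ l₁ l₂ : ℝ} {A₁ A₂ B : E →L[ℝ] F} {L : List (ℝ × (E →L[ℝ] F))}
  {Os : List (Set E)}

theorem split (h : IsLaminateApprox μ V Ω w ε u ((l₁ + l₂, B) :: L) Os)
    (hB : B = (l₁ + l₂)⁻¹ • (l₁ • A₁ + l₂ • A₂)) (hBV : B ∈ V) (hV : IsOpen V) (hΩ : μ Ω ≠ ⊤)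
    (hA₁ : A₁ ∈ V) (hA₂ : A₂ ∈ V) {p : E →L[ℝ] ℝ} (hp : p ≠ 0) {a : F}
    (hpa : A₁ - A₂ = p.smulRight a) (hl₁ : 0 < l₁) (hl₂ : 0 < l₂) (hδ : 0 < δ) :
    ∃ u' Os', IsLaminateApprox μ V Ω w (ε + δ) u' ((l₁, A₁) :: (l₂, A₂) :: L) Os' := by
  obtain ⟨hu, hw, hε, hphases, hdisj⟩ := h
  obtain ⟨O, Os, hO, hrest, rfl⟩ := List.forall₂_cons_left_iff.1 hphases
  obtain ⟨hOdisj, hdisj⟩ := List.pairwise_cons.1 hdisj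
  set t := l₁ / (l₁ + l₂)
  have hl : l₁ + l₂ ≠ 0 := by positivity
  have ht01 : t ∈ Icc (0 : ℝ) 1 := ⟨by positivity, (div_le_one (by positivity)).2 (by linarith)⟩
  have htl₁ : t * (l₁ + l₂) = l₁ := div_mul_cancel₀ _ hl
  have htl₂ : (1 - t) * (l₁ + l₂) = l₂ := by rw [sub_mul, htl₁]; ring
  have hBt : B = t • A₁ + (1 - t) • A₂ := by
    rw [hB, inv_smul_eq_iff₀ hl, smul_add, smul_smul, smul_smul, mul_comm _ t, mul_comm _ (1 - t),
      htl₁, htl₂]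
  subst hBt
  have hOfin : μ O ≠ ⊤ := measure_ne_top_of_subset hO.subset hΩ
  obtain ⟨u', O₁, O₂, hu', huu', hδ', h₁, h₂, h₁₂⟩ :=
    hu.exists_rankOne_split hV hA₁ hA₂ hp hpa ht01 hBV hO.isOpen hOfin hO.locallyAffineAt hδ
  refine ⟨u', O₁ :: O₂ :: Os, hu', fun x hx => ?_, fun x => ?_, .cons ?_ (.cons ?_ ?_), ?_⟩
  · exact (huu' x fun hxO => hx (hO.subset hxO)).self_of_nhds.trans (hw hx)
  · linarith [norm_sub_le_norm_sub_add_norm_sub (u' x) (u x) (w x), hδ' x, hε x]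
  · exact htl₁ ▸ hO.trans h₁ ht01
  · exact htl₂ ▸ hO.trans h₂ ⟨sub_nonneg.2 ht01.2, sub_le_self _ ht01.1⟩
  · refine .flip (((List.forall₂_and_left _ _).2 ⟨hOdisj, hrest.flip⟩).imp ?_)
    rintro O' α ⟨hOO', hO'⟩
    exact hO'.congr (fun x hx => huu' x (Set.disjoint_right.1 hOO' hx)) (by linarith)
  · refine List.pairwise_cons.2 ⟨?_, List.pairwise_cons.2 ⟨fun O' hO' => ?_, hdisj⟩⟩
    · rintro O' (_ | ⟨_, hO'⟩)
      exacts [h₁₂, (hOdisj O' hO').mono_left h₁.subset]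
    · exact (hOdisj O' hO').mono_left h₂.subset

end IsLaminateApprox

end Laminate

section Matrices

theorem exists_eq_smulRight_of_finrank_range_eq_one {E F : Type*} [NormedAddCommGroup E]
    [NormedSpace ℝ E] [FiniteDimensional ℝ E] [NormedAddCommGroup F] [NormedSpace ℝ F]
    {A : E →L[ℝ] F} (hA : Module.finrank ℝ A.range = 1) :
    ∃ p : E →L[ℝ] ℝ, p ≠ 0 ∧ ∃ a : F, A = p.smulRight a := by
  have hA0 : A ≠ 0 := by
    rintro rfl
    rw [ContinuousLinearMap.toLinearMap_zero, LinearMap.range_zero, finrank_bot] at hA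
    exact zero_ne_one hA
  let b := Module.basisUnique (Fin 1) hA
  let p : E →ₗ[ℝ] ℝ := b.coord 0 ∘ₗ A.toLinearMap.rangeRestrict
  have hAp : A = p.toContinuousLinearMap.smulRight (b 0 : F) := by
    ext x
    have hx := congrArg Subtype.val (b.sum_repr (A.toLinearMap.rangeRestrict x))
    rw [Fin.sum_univ_one] at hx
    exact hx.symm
  refine ⟨p.toContinuousLinearMap, fun hp => hA0 ?_, _, hAp⟩
  rw [hAp, hp, ContinuousLinearMap.zero_smulRight]

/-- Matrices as continuous linear maps, `A ↦ (x ↦ A x)`. -/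
noncomputable def matrixToCLM (N n : ℕ) : Mat N n ≃L[ℝ] ((Fin n → ℝ) →L[ℝ] (Fin N → ℝ)) :=
  (Matrix.toLin' ≪≫ₗ LinearMap.toContinuousLinearMap).toContinuousLinearEquiv

variable {N n : ℕ}

theorem matrixToCLM_apply (A : Mat N n) (x : Fin n → ℝ) : matrixToCLM N n A x = A.mulVec x :=
  rfl

theorem exists_matrixToCLM_sub_eq_smulRight {A B : Mat N n} (h : (A - B).rank = 1) :
    ∃ p : (Fin n → ℝ) →L[ℝ] ℝ, p ≠ 0 ∧
      ∃ a : Fin N → ℝ, matrixToCLM N n A - matrixToCLM N n B = p.smulRight a := by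
  rw [← map_sub]
  exact exists_eq_smulRight_of_finrank_range_eq_one h

theorem LocallyAffineAt.matGrad_eq {u : (Fin n → ℝ) → Fin N → ℝ}
    {A : (Fin n → ℝ) →L[ℝ] (Fin N → ℝ)} {x : Fin n → ℝ} (h : LocallyAffineAt u A x) :
    matGrad u x = (matrixToCLM N n).symm A := by
  rw [matGrad, h.hasFDerivAt.fderiv]
  rfl

theorem PiecewiseAffineWith.piecewiseAffineOn {V : Set ((Fin n → ℝ) →L[ℝ] (Fin N → ℝ))}
    {u : (Fin n → ℝ) → Fin N → ℝ} (h : PiecewiseAffineWith volume V u) {Ω : Set (Fin n → ℝ)}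
    (hΩ : IsOpen Ω) : PiecewiseAffineOn u Ω := by
  obtain ⟨P, hPo, hPd, hP0, hPA⟩ := h.exists_seq_pieces
  refine ⟨h.continuous.continuousOn, fun k => P k ∩ Ω, fun k => (hPo k).inter hΩ,
    fun k => inter_subset_right, fun k m hkm => (hPd hkm).mono inter_subset_left inter_subset_left,
    measure_mono_null ?_ hP0, fun k => ?_⟩
  · rw [← iUnion_inter, sdiff_inter_self_eq_sdiff]
    exact fun x hx => hx.2
  · obtain ⟨A, b, hAb⟩ := hPA k
    refine ⟨(matrixToCLM N n).symm A, b, fun x hx => ?_⟩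
    rw [hAb x hx.1, ← matrixToCLM_apply, ContinuousLinearEquiv.apply_symm_apply]

namespace HIProp

variable {U : Set (Mat N n)} {L : List (ℝ × Mat N n)}

theorem mem (h : HIProp U L) : ∀ α ∈ L, α.2 ∈ U := by
  induction h with
  | single l ξ hξ => simpa using hξ
  | pair l₁ l₂ ξ₁ ξ₂ h₁ h₂ _ => simpa using ⟨h₁, h₂⟩
  | step L rest l₁ l₂ ξ₁ ξ₂ hperm _ h₁ h₂ _ _ ih =>
    intro α hα
    rw [hperm.mem_iff, List.mem_cons, List.mem_cons] at hα
    rcases hα with rfl | rfl | hα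
    exacts [h₁, h₂, ih α (List.mem_cons_of_mem _ hα)]

theorem exists_isLaminateApprox (h : HIProp U L) {V : Set ((Fin n → ℝ) →L[ℝ] (Fin N → ℝ))}
    (hV : IsOpen V) (hUV : MapsTo (matrixToCLM N n) U V) (hpos : ∀ α ∈ L, 0 < α.1)
    (hsum : (L.map Prod.fst).sum = 1) {ξ : Mat N n} (hξ : (L.map fun α => α.1 • α.2).sum = ξ)
    (hξV : matrixToCLM N n ξ ∈ V) {Ω : Set (Fin n → ℝ)} (hΩ : IsOpen Ω) (hΩfin : volume Ω ≠ ⊤)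
    (b : Fin N → ℝ) {ε : ℝ} (hε : 0 < ε) :
    ∃ u Os, IsLaminateApprox volume V Ω (fun x => matrixToCLM N n ξ x + b) ε u
      (L.map (Prod.map id (matrixToCLM N n))) Os := by
  induction h generalizing ε with
  | single l A _ =>
    obtain rfl : l = 1 := by simpa using hsum
    obtain rfl : A = ξ := by simpa using hξ
    exact ⟨_, _, .single hΩ hξV b hε.le⟩
  | pair l₁ l₂ A₁ A₂ h₁ h₂ hrank =>
    obtain ⟨p, hp, a, hpa⟩ := exists_matrixToCLM_sub_eq_smulRight hrank
    have hl : l₁ + l₂ = 1 := by simpa using hsum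
    have happrox : IsLaminateApprox volume V Ω (fun x => matrixToCLM N n ξ x + b) (ε / 2)
        (fun x => matrixToCLM N n ξ x + b) [(l₁ + l₂, matrixToCLM N n ξ)] [Ω] :=
      hl ▸ .single hΩ hξV b (half_pos hε).le
    obtain ⟨u, Os, hu⟩ := happrox.split (by simp [hl, ← hξ]) hξV hV hΩfin (hUV h₁) (hUV h₂) hp hpa
      (hpos (l₁, A₁) (by simp)) (hpos (l₂, A₂) (by simp)) (half_pos hε)
    exact ⟨u, Os, add_halves ε ▸ hu⟩
  | step L rest l₁ l₂ A₁ A₂ hperm _ h₁ h₂ hrank hrec ih =>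
    obtain ⟨p, hp, a, hpa⟩ := exists_matrixToCLM_sub_eq_smulRight hrank
    have hl₁ : 0 < l₁ := hpos (l₁, A₁) (hperm.mem_iff.2 (by simp))
    have hl₂ : 0 < l₂ := hpos (l₂, A₂) (hperm.mem_iff.2 (by simp))
    have hrest : ∀ α ∈ rest, 0 < α.1 := fun α hα => hpos α (hperm.mem_iff.2 (by simp [hα]))
    rw [(hperm.map _).sum_eq] at hsum hξ
    obtain ⟨u, Os, hu⟩ := ih (ε := ε / 2)
      (List.forall_mem_cons.2 ⟨add_pos hl₁ hl₂, hrest⟩)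
      (by simpa [add_assoc] using hsum)
      (by simpa [(add_pos hl₁ hl₂).ne', add_assoc] using hξ) (half_pos hε)
    obtain ⟨u', Os', hu'⟩ := IsLaminateApprox.split hu (by simp)
      (hUV (hrec.mem _ List.mem_cons_self)) hV hΩfin (hUV h₁) (hUV h₂) hp hpa hl₁ hl₂ (half_pos hε)
    rw [add_halves] at hu'
    exact ⟨u', hu'.perm (hperm.map _)⟩

end HIProp

theorem exists_ofFn_eq_of_forall₂_ofFn {α β : Type*} {R : α → β → Prop} {I : ℕ} {f : Fin I → α}
    {l : List β} (h : List.Forall₂ R (List.ofFn f) l) :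
    ∃ g : Fin I → β, List.ofFn g = l ∧ ∀ i, R (f i) (g i) := by
  obtain ⟨hlen, hget⟩ := List.forall₂_iff_get.1 h
  rw [List.length_ofFn] at hlen
  subst hlen
  exact ⟨l.get, List.ofFn_get l, fun i => by simpa using hget i (by simp) i.2⟩

end Matrices

theorem stmt5_general {N n : ℕ} (I : ℕ) (U : Set (Mat N n)) (hU : IsOpen U)
    (l : Fin I → ℝ) (ξs : Fin I → Mat N n) (hl : ∀ i, 0 < l i) (hsum : ∑ i, l i = 1)
    (hH : SatisfiesH U I l ξs) (ξ : Mat N n) (hξ : ξ = ∑ i, l i • ξs i)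
    (b : Fin N → ℝ) (ε : ℝ) (hε : 0 < ε)
    (Ω : Set (Fin n → ℝ)) (hΩo : IsOpen Ω) (hΩfin : volume Ω ≠ ⊤) :
    ∃ (u : (Fin n → ℝ) → Fin N → ℝ) (O : Fin I → Set (Fin n → ℝ)),
      PiecewiseAffineOn u Ω ∧
      MemW01inf Ω (fun x => ξ.mulVec x + b) u ∧
      (∀ i, IsOpen (O i) ∧ O i ⊆ Ω) ∧
      (∀ i j, i ≠ j → Disjoint (O i) (O j)) ∧
      (∀ᵐ x ∂(MeasureTheory.volume.restrict Ω), matGrad u x ∈ U ∪ Metric.ball ξ ε) ∧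
      (∀ i, ∀ᵐ x ∂(MeasureTheory.volume.restrict (O i)), matGrad u x = ξs i) ∧
      (∀ x ∈ Ω, ‖u x - (ξ.mulVec x + b)‖ ≤ ε) ∧
      (∀ i, |(MeasureTheory.volume (O i)).toReal
        - l i * (MeasureTheory.volume Ω).toReal| ≤ ε) := by
  set V : Set ((Fin n → ℝ) →L[ℝ] (Fin N → ℝ)) := (matrixToCLM N n).symm ⁻¹' (U ∪ ball ξ ε)
  have hV : IsOpen V := (hU.union isOpen_ball).preimage (matrixToCLM N n).symm.continuous
  have hΦV : MapsTo (matrixToCLM N n) (U ∪ ball ξ ε) V := fun A hA => by simpa [V] using hA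
  obtain ⟨u, Os, hu⟩ := hH.exists_isLaminateApprox hV (hΦV.mono_left subset_union_left)
    (by simpa [List.forall_mem_ofFn_iff] using hl) (by simpa [List.sum_ofFn] using hsum)
    (by simpa [List.sum_ofFn] using hξ.symm) (hΦV (Or.inr (mem_ball_self hε))) hΩo hΩfin b hε
  obtain ⟨huV, huw, huε, hphases, hdisj⟩ := hu
  rw [List.map_ofFn] at hphases
  obtain ⟨O, rfl, hO⟩ := exists_ofFn_eq_of_forall₂_ofFn hphases
  refine ⟨u, O, huV.piecewiseAffineOn hΩo, ⟨?_, fun x hx => huw ?_⟩,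
    fun i => ⟨(hO i).isOpen, (hO i).subset⟩, ?_, ?_, fun i => ?_, fun x _ => huε x,
    fun i => (hO i).abs_measureReal_sub_le⟩
  · exact huV.lipschitz.imp fun _ hC => hC.lipschitzOnWith
  · exact (hΩo.frontier_eq ▸ hx).2
  · rw [List.pairwise_ofFn] at hdisj
    exact fun i j hij => hij.lt_or_gt.elim (hdisj · ) fun h => (hdisj h).symm
  · refine ae_restrict_of_ae (huV.ae_locallyAffineAt.mono ?_)
    rintro x ⟨A, hA, hx⟩
    exact hx.matGrad_eq ▸ hA
  · refine ae_restrict_of_forall_mem (hO i).isOpen.measurableSet fun x hx => ?_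
    simpa using ((hO i).locallyAffineAt x hx).matGrad_eq

end ConvexIntegration

theorem stmt5 {N n : ℕ} (I : ℕ) (hI : 1 < I) (U : Set (Mat N n)) (hU : IsOpen U)
    (l : Fin I → ℝ) (ξs : Fin I → Mat N n) (hl : ∀ i, 0 < l i) (hsum : ∑ i, l i = 1)
    (hH : SatisfiesH U I l ξs) (ξ : Mat N n) (hξ : ξ = ∑ i, l i • ξs i)
    (b : Fin N → ℝ) (ε : ℝ) (hε : 0 < ε)
    (Ω : Set (Fin n → ℝ)) (hΩo : IsOpen Ω) (hΩb : Bornology.IsBounded Ω) :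
    ∃ (u : (Fin n → ℝ) → Fin N → ℝ) (O : Fin I → Set (Fin n → ℝ)),
      PiecewiseAffineOn u Ω ∧
      MemW01inf Ω (fun x => ξ.mulVec x + b) u ∧
      (∀ i, IsOpen (O i) ∧ O i ⊆ Ω) ∧
      (∀ i j, i ≠ j → Disjoint (O i) (O j)) ∧
      (∀ᵐ x ∂(MeasureTheory.volume.restrict Ω), matGrad u x ∈ U ∪ Metric.ball ξ ε) ∧
      (∀ i, ∀ᵐ x ∂(MeasureTheory.volume.restrict (O i)), matGrad u x = ξs i) ∧
      (∀ x ∈ Ω, ‖u x - (ξ.mulVec x + b)‖ ≤ ε) ∧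
      (∀ i, |(MeasureTheory.volume (O i)).toReal
        - l i * (MeasureTheory.volume Ω).toReal| ≤ ε) :=
  stmt5_general I U hU l ξs hl hsum hH ξ hξ b ε hε Ω hΩo hΩb.measure_lt_top.ne

end Statements
end

section
/- Let E ⊆ ℝ^{n×n} be of the form E = {ξ ∈ ℝ^{n×n} : (λ_1(ξ),…,λ_n(ξ)) ∈ Λ_E, det ξ ≥ 0} for some compact set Λ_E ⊆ {(x_1,…,x_n) ∈ ℝ^n : 0 ≤ x_1 ≤ … ≤ x_n}. Then Rco_f E has the same form; more precisely, Rco_f E = {ξ ∈ ℝ^{n×n} : (λ_1(ξ),…,λ_n(ξ)) ∈ Λ', det ξ ≥ 0}, where Λ' := {(λ_1(ξ),…,λ_n(ξ)) : ξ ∈ Rco_f E} is a compact subset of {(x_1,…,x_n) ∈ ℝ^n : 0 ≤ x_1 ≤ … ≤ x_n}. -/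
open MeasureTheory Filter

attribute [local instance] Classical.propDecidable
attribute [local instance] Matrix.frobeniusNormedAddCommGroup Matrix.frobeniusNormedSpace

section Statements

open Metric Set

/-!
Everything rests on three families of rank one convex functions: convex functions, `-det`, and
`ξ ↦ f (A ξ B)` for `f` rank one convex and `A`, `B` invertible. Testing the hull `Rco_f E` against
the norm shows that it is bounded, and against `-det` that `det ≥ 0` persists. The third family
transports invariance from `E` to `Rco_f E`: both are stable under `ξ ↦ U ξ V` with `U`, `V`
orthogonal and `det U det V = 1`. The hull is closed because a rank one convex function is convex in
each entry, hence lower semicontinuous.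

A matrix with `det ξ ≥ 0` is `U diag(λ(ξ)) V` with `det U det V = 1`: if the product of the
determinants is `-1`, then `det ξ ≤ 0`, so some singular value vanishes and the corresponding column
of `U` may change sign. Hence membership of `ξ` in the hull depends only on `λ(ξ)`, and the set of
singular values of the hull is its diagonal slice cut by the cone of nonnegative nondecreasing
vectors, which is compact.
-/

section RankOneConvexity

open Matrix

theorem exists_eq_vecMulVec_of_rank_le_one {m n K : Type*} [Finite m] [Fintype n] [Field K]
    {A : Matrix m n K} (hA : A.rank ≤ 1) : ∃ u v, A = vecMulVec u v := by
  obtain ⟨u, hu⟩ := finrank_le_one_iff.1 hA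
  choose v hv using fun j => hu ⟨A.col j, Pi.single j 1, A.mulVec_single_one j⟩
  refine ⟨u, v, Matrix.ext fun i j => ?_⟩
  have hij := congrFun (congrArg Subtype.val (hv j)) i
  simpa [vecMulVec_apply, mul_comm] using hij.symm

theorem rank_vecMulVec_eq_one {m n K : Type*} [Fintype n] [Field K] {u : m → K} {v : n → K}
    (h : vecMulVec u v ≠ 0) : (vecMulVec u v).rank = 1 := by
  refine le_antisymm (rank_vecMulVec_le u v) (Nat.one_le_iff_ne_zero.2 fun h0 => h ?_)
  have hzero : (vecMulVec u v).mulVecLin = 0 :=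
    LinearMap.range_eq_bot.1 (Submodule.finrank_eq_zero.1 h0)
  classical
  refine Matrix.ext fun i j => ?_
  simpa using congrFun (LinearMap.congr_fun hzero (Pi.single j 1)) i

-- The bordered matrix `[[A, u], [-t v, 1]]` has determinant `det (A + t u vᵀ)`, and its last row is
-- affine in `t`.
theorem det_add_smul_vecMulVec {n R : Type*} [Fintype n] [DecidableEq n] [CommRing R]
    (A : Matrix n n R) (u v : n → R) (t : R) :
    (A + t • vecMulVec u v).det =
      t * (A + vecMulVec u v).det + (1 - t) * A.det := by
  let M : Matrix (n ⊕ Unit) (n ⊕ Unit) R :=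
    fromBlocks A (replicateCol Unit u) 0 1
  have det_M (w : n → R) :
      (M.updateRow (Sum.inr ()) (Sum.elim (-w) 1)).det = (A + vecMulVec u w).det := by
    have hM : M.updateRow (Sum.inr ()) (Sum.elim (-w) 1) = fromBlocks A
        (replicateCol Unit u) (-replicateRow Unit w) 1 := by
      ext (i | i) (j | j) <;> simp [M]
    rw [hM, det_fromBlocks_one₂₂, Matrix.mul_neg, sub_neg_eq_add, vecMulVec_eq Unit]
  have row_eq : Sum.elim (-(t • v)) (1 : Unit → R) =
      t • Sum.elim (-v) 1 + (1 - t) • Sum.elim (-(0 : n → R)) 1 := by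
    ext (i | i) <;> simp
  rw [← vecMulVec_smul, ← det_M, row_eq, det_updateRow_add,
    det_updateRow_smul, det_updateRow_smul, det_M, det_M, vecMulVec_zero,
    add_zero]

/-- Convexity of a function of several real variables in each coordinate separately; for functions
of a matrix it is what remains of rank one convexity on the lines along matrix units. -/
def SeparatelyConvex {ι : Type*} [DecidableEq ι] (f : (ι → ℝ) → ℝ) : Prop :=
  ∀ x i, ConvexOn ℝ univ fun s => f (Function.update x i s)

theorem sub_le_one_add_abs_mul_sub_of_convexOn {φ : ℝ → ℝ} (hφ : ConvexOn ℝ univ φ) {M c t : ℝ}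
    (hM : ∀ s ∈ Icc (c - 1) (c + 1), φ s ≤ M) :
    M - φ t ≤ (1 + |t - c|) * (M - φ c) := by
  obtain rfl | hne := eq_or_ne t c
  · simp
  set δ := |t - c|
  have hδ : 0 < δ := abs_pos.2 (sub_ne_zero.2 hne)
  have hq : φ (c - (t - c) / δ) ≤ M := hM _ <| by
    have h1 : |(t - c) / δ| ≤ 1 := by rw [abs_div, abs_abs, div_self hδ.ne']
    obtain ⟨h2, h3⟩ := abs_le.1 h1
    constructor <;> linarith
  have hc : 1 / (1 + δ) * t + δ / (1 + δ) * (c - (t - c) / δ) = c := by field_simp; ring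
  have hconv := hφ.2 (mem_univ t) (mem_univ (c - (t - c) / δ))
    (show 0 ≤ 1 / (1 + δ) by positivity) (show 0 ≤ δ / (1 + δ) by positivity) (by field_simp)
  simp only [smul_eq_mul, hc] at hconv
  calc M - φ t ≤ M - φ t + δ * (M - φ (c - (t - c) / δ)) := by nlinarith
    _ = (1 + δ) * (M - (1 / (1 + δ) * φ t + δ / (1 + δ) * φ (c - (t - c) / δ))) := by
      field_simp; ring
    _ ≤ (1 + δ) * (M - φ c) := by gcongr

namespace SeparatelyConvex

variable {ι : Type*} [DecidableEq ι] {f : (ι → ℝ) → ℝ}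

theorem bddAbove_image_Icc [Finite ι] (hf : SeparatelyConvex f) (l u : ι → ℝ) :
    BddAbove (f '' Icc l u) := by
  cases nonempty_fintype ι
  suffices H : ∀ (S : Finset ι) (w : ι → ℝ), ∃ M, ∀ y ∈ Icc l u, f (S.piecewise y w) ≤ M by
    obtain ⟨M, hM⟩ := H Finset.univ 0
    exact ⟨M, forall_mem_image.2 fun y hy => by simpa using hM y hy⟩
  intro S
  induction S using Finset.induction_on with
  | empty => exact fun w => ⟨f w, fun y _ => by simp⟩
  | insert a S ha ih =>
    intro w
    obtain ⟨M₁, hM₁⟩ := ih (Function.update w a (l a))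
    obtain ⟨M₂, hM₂⟩ := ih (Function.update w a (u a))
    refine ⟨max M₁ M₂, fun y hy => ?_⟩
    rw [Finset.piecewise_insert]
    refine ((hf _ a).le_max_of_mem_Icc (mem_univ (l a)) (mem_univ (u a))
      ⟨hy.1 a, hy.2 a⟩).trans (max_le_max ?_ ?_)
    · simpa only [Finset.update_piecewise_of_notMem _ _ _ ha] using hM₁ y hy
    · simpa only [Finset.update_piecewise_of_notMem _ _ _ ha] using hM₂ y hy

theorem sub_le_prod_mul_sub [Fintype ι] (hf : SeparatelyConvex f) {x y : ι → ℝ} {M : ℝ}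
    (hM : ∀ z ∈ Icc (x - 1) (x + 1), f z ≤ M) (hy : y ∈ Icc (x - 1) (x + 1)) :
    M - f y ≤ (∏ i, (1 + |y i - x i|)) * (M - f x) := by
  suffices H : ∀ S : Finset ι,
      M - f (S.piecewise y x) ≤ (∏ i ∈ S, (1 + |y i - x i|)) * (M - f x) by
    simpa using H Finset.univ
  intro S
  induction S using Finset.induction_on with
  | empty => simp
  | insert a S ha ih =>
    set z := S.piecewise y x
    have hx : x ∈ Icc (x - 1) (x + 1) := by constructor <;> intro i <;> simp
    have hz : z ∈ Icc (x - 1) (x + 1) :=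
      ⟨Finset.le_piecewise_of_le_of_le S hy.1 hx.1, Finset.piecewise_le_of_le_of_le S hy.2 hx.2⟩
    have hza : Function.update z a (x a) = z := by
      rw [Finset.update_piecewise_of_notMem _ _ _ ha, Function.update_eq_self]
    have hline : ∀ s ∈ Icc (x a - 1) (x a + 1), f (Function.update z a s) ≤ M := fun s hs =>
      hM _ ⟨le_update_iff.2 ⟨hs.1, fun i _ => hz.1 i⟩, update_le_iff.2 ⟨hs.2, fun i _ => hz.2 i⟩⟩
    have hstep := sub_le_one_add_abs_mul_sub_of_convexOn (hf z a) (t := y a) hline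
    rw [hza] at hstep
    rw [Finset.piecewise_insert, Finset.prod_insert ha, mul_assoc]
    exact hstep.trans (by gcongr)

theorem lowerSemicontinuous [Finite ι] (hf : SeparatelyConvex f) : LowerSemicontinuous f := by
  cases nonempty_fintype ι
  intro x b hb
  obtain ⟨M, hM⟩ := hf.bddAbove_image_Icc (x - 1) (x + 1)
  have hcont : Continuous fun y : ι → ℝ => (∏ i, (1 + |y i - x i|)) * (M - f x) := by fun_prop
  have hlt : ∀ᶠ y in nhds x, (∏ i, (1 + |y i - x i|)) * (M - f x) < M - b :=
    hcont.continuousAt.eventually_lt continuousAt_const (by simpa using hb)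
  have hmem : Icc (x - 1) (x + 1) ∈ nhds x := by
    rw [← pi_univ_Icc]
    exact set_pi_mem_nhds finite_univ fun i _ => Icc_mem_nhds (by simp) (by simp)
  filter_upwards [hlt, hmem] with y hy hyI
  linarith [hf.sub_le_prod_mul_sub (forall_mem_image.1 hM) hyI]

end SeparatelyConvex

theorem RankOneConvexFun.convexOn_add_smul_vecMulVec {N n : ℕ} {f : Mat N n → ℝ}
    (hf : RankOneConvexFun f) (ξ : Mat N n) (u : Fin N → ℝ) (v : Fin n → ℝ) :
    ConvexOn ℝ univ fun s : ℝ => f (ξ + s • vecMulVec u v) := by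
  refine ⟨convex_univ, fun s _ t _ a b ha hb hab => ?_⟩
  obtain rfl : b = 1 - a := by linarith
  have hcomb : ξ + (a • s + (1 - a) • t) • vecMulVec u v =
      a • (ξ + s • vecMulVec u v) + (1 - a) • (ξ + t • vecMulVec u v) := by
    module
  have hsub : ξ + s • vecMulVec u v - (ξ + t • vecMulVec u v) =
      vecMulVec ((s - t) • u) v := by
    rw [smul_vecMulVec]; module
  obtain h0 | hne := eq_or_ne (vecMulVec ((s - t) • u) v) 0
  · have heq := sub_eq_zero.1 (hsub.trans h0)
    change f _ ≤ a * f _ + (1 - a) * f _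
    rw [hcomb, heq, ← add_smul, ← add_mul, hab, one_smul, one_mul]
  · simp only [hcomb]
    exact hf a ⟨ha, by linarith⟩ _ _ (hsub ▸ rank_vecMulVec_eq_one hne)

theorem RankOneConvexFun.lowerSemicontinuous {N n : ℕ} {f : Mat N n → ℝ}
    (hf : RankOneConvexFun f) : LowerSemicontinuous f := by
  let ofEntries (x : Fin N × Fin n → ℝ) : Mat N n := of fun i j => x (i, j)
  have hsep : SeparatelyConvex (f ∘ ofEntries) := by
    rintro x ⟨i, j⟩
    refine (hf.convexOn_add_smul_vecMulVec (ofEntries (Function.update x (i, j) 0))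
      (Pi.single i 1) (Pi.single j 1)).congr fun s _ => congrArg f ?_
    ext k l
    by_cases hk : k = i <;> by_cases hl : l = j <;>
      simp [ofEntries, vecMulVec_apply, Function.update_apply, hk, hl]
  exact hsep.lowerSemicontinuous.comp (g := fun (ξ : Mat N n) p => ξ p.1 p.2)
    (by fun_prop)

theorem RankOneConvexFun.comp_mul_mul {N n : ℕ} {f : Mat N n → ℝ} (hf : RankOneConvexFun f)
    {A : Mat N N} {B : Mat n n} (hA : IsUnit A.det) (hB : IsUnit B.det) :
    RankOneConvexFun fun ξ : Mat N n => f (A * ξ * B) := by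
  intro t ht ξ η hrank
  have hrank' : (A * ξ * B - A * η * B).rank = 1 := by
    rw [← Matrix.sub_mul, ← Matrix.mul_sub, rank_mul_eq_left_of_isUnit_det _ _ hB,
      rank_mul_eq_right_of_isUnit_det _ _ hA, hrank]
  simpa only [Matrix.mul_add, Matrix.add_mul, Matrix.mul_smul, Matrix.smul_mul]
    using hf t ht _ _ hrank'

theorem rankOneConvexFun_of_convexOn {N n : ℕ} {f : Mat N n → ℝ} (hf : ConvexOn ℝ univ f) :
    RankOneConvexFun f := fun t ht ξ η _ =>
  hf.2 (mem_univ ξ) (mem_univ η) ht.1 (sub_nonneg.2 ht.2) (by ring)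

theorem rankOneConvexFun_neg_det {n : ℕ} : RankOneConvexFun fun ξ : Mat n n => -ξ.det := by
  intro t _ ξ η hrank
  obtain ⟨u, v, huv⟩ := exists_eq_vecMulVec_of_rank_le_one hrank.le
  obtain rfl : ξ = η + vecMulVec u v := by rw [← huv]; abel
  have hline : t • (η + vecMulVec u v) + (1 - t) • η = η + t • vecMulVec u v := by
    module
  simp only [hline, det_add_smul_vecMulVec]
  linarith

theorem isClosed_rcoF {N n : ℕ} (E : Set (Mat N n)) : IsClosed (RcoF E) := by
  have hinter : RcoF E = ⋂ (f : Mat N n → ℝ) (_ : RankOneConvexFun f) (_ : ∀ η ∈ E, f η ≤ 0),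
      f ⁻¹' Iic 0 := by
    ext ξ
    simp only [RcoF, mem_iInter, mem_preimage, mem_Iic, mem_ofPred_eq]
  rw [hinter]
  exact isClosed_iInter fun f => isClosed_iInter fun hf => isClosed_iInter fun _ =>
    hf.lowerSemicontinuous.isClosed_preimage 0

theorem isBounded_rcoF {N n : ℕ} {E : Set (Mat N n)} (hE : Bornology.IsBounded E) :
    Bornology.IsBounded (RcoF E) := by
  obtain ⟨C, hC⟩ := isBounded_iff_forall_norm_le.1 hE
  have hconv : ConvexOn ℝ univ fun η : Mat N n => ‖η‖ - C :=
    convexOn_univ_norm.sub (concaveOn_const C convex_univ)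
  exact isBounded_iff_forall_norm_le.2 ⟨C, fun ξ hξ => sub_nonpos.1 <|
    hξ _ (rankOneConvexFun_of_convexOn hconv) fun η hη => sub_nonpos.2 (hC η hη)⟩

theorem isCompact_rcoF {N n : ℕ} {E : Set (Mat N n)} (hE : Bornology.IsBounded E) :
    IsCompact (RcoF E) :=
  isCompact_of_isClosed_isBounded (isClosed_rcoF E) (isBounded_rcoF hE)

theorem det_nonneg_of_mem_rcoF {n : ℕ} {E : Set (Mat n n)} (hE : ∀ ξ ∈ E, 0 ≤ ξ.det) {ξ : Mat n n}
    (hξ : ξ ∈ RcoF E) : 0 ≤ ξ.det :=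
  neg_nonpos.1 (hξ _ rankOneConvexFun_neg_det fun η hη => neg_nonpos.2 (hE η hη))

theorem mul_mul_mem_rcoF {N n : ℕ} {E F : Set (Mat N n)} {A : Mat N N} {B : Mat n n}
    (hA : IsUnit A.det) (hB : IsUnit B.det) (hEF : ∀ ξ ∈ E, A * ξ * B ∈ F) {ξ : Mat N n}
    (hξ : ξ ∈ RcoF E) : A * ξ * B ∈ RcoF F := fun _ hf hfF =>
  hξ _ (hf.comp_mul_mul hA hB) fun η hη => hfF _ (hEF η hη)

end RankOneConvexity

section SingularValues

open Matrix

theorem eq_of_map_univ_eq_of_monotone {α : Type*} [PartialOrder α] {n : ℕ} {f g : Fin n → α}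
    (hf : Monotone f) (hg : Monotone g)
    (h : Finset.univ.val.map f = Finset.univ.val.map g) : f = g :=
  List.ofFn_injective <| List.Perm.eq_of_sortedLE hf.sortedLE_ofFn hg.sortedLE_ofFn <|
    Multiset.coe_eq_coe.1 <| by simpa only [Fin.univ_val_map] using h

theorem eigenvalues_comp_sort_eq {n : ℕ} {A : Mat n n} (hA : A.IsHermitian) {d : Fin n → ℝ}
    (hd : Monotone d) (h : A.charpoly = (Matrix.diagonal d).charpoly) :
    hA.eigenvalues ∘ Tuple.sort hA.eigenvalues = d := by
  refine eq_of_map_univ_eq_of_monotone (Tuple.monotone_sort _) hd ?_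
  have hroots := congrArg Polynomial.roots h
  rw [hA.roots_charpoly_eq_eigenvalues, charpoly_diagonal,
    Polynomial.roots_prod _ _ (Finset.prod_ne_zero_iff.2 fun i _ => Polynomial.X_sub_C_ne_zero _)]
    at hroots
  rw [← Multiset.map_map, Multiset.map_univ_val_equiv]
  simpa using hroots

section Unitary

variable {R : Type*} [Monoid R] [StarMul R] {U V : R}

theorem star_mul_mul_mul_mul_star_of_mem_unitary (hU : U ∈ unitary R) (hV : V ∈ unitary R)
    (x : R) : star U * (U * x * V) * star V = x := by
  rw [← mul_assoc, ← mul_assoc, Unitary.star_mul_self_of_mem hU, one_mul, mul_assoc,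
    Unitary.mul_star_self_of_mem hV, mul_one]

theorem mul_mul_mul_star_of_mem_unitary (x : R) (hV : V ∈ unitary R) :
    U * x * V * star (U * x * V) = U * (x * star x) * star U := by
  rw [star_mul, star_mul, mul_assoc (U * x), ← mul_assoc V, Unitary.mul_star_self_of_mem hV,
    one_mul]
  simp only [mul_assoc]

end Unitary

theorem norm_sq_eq_trace_mul_conjTranspose {N n : ℕ} (ξ : Mat N n) :
    ‖ξ‖ ^ 2 = (ξ * ξ.conjTranspose).trace := by
  rw [frobenius_norm_def, ← Real.sqrt_eq_rpow, Real.sq_sqrt (by positivity)]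
  simp [Matrix.trace, Matrix.mul_apply, sq]

theorem norm_mul_mul_of_mem_orthogonalGroup {n : ℕ} {U V : Mat n n}
    (hU : U ∈ orthogonalGroup (Fin n) ℝ) (hV : V ∈ orthogonalGroup (Fin n) ℝ)
    (ξ : Mat n n) : ‖U * ξ * V‖ = ‖ξ‖ := by
  refine (sq_eq_sq₀ (norm_nonneg _) (norm_nonneg _)).1 ?_
  simp only [norm_sq_eq_trace_mul_conjTranspose, ← star_eq_conjTranspose]
  rw [mul_mul_mul_star_of_mem_unitary ξ hV, trace_mul_comm, ← Matrix.mul_assoc,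
    Unitary.star_mul_self_of_mem hU, Matrix.one_mul]

theorem singularValues_nonneg {n : ℕ} (ξ : Mat n n) (i : Fin n) : 0 ≤ singularValues ξ i :=
  Real.sqrt_nonneg _

theorem singularValues_monotone {n : ℕ} (ξ : Mat n n) : Monotone (singularValues ξ) :=
  fun _ _ hij => Real.sqrt_le_sqrt
    (Tuple.monotone_sort (isHermitian_mul_conjTranspose_self ξ).eigenvalues hij)

theorem singularValues_mul_diagonal_mul {n : ℕ} {U V : Mat n n}
    (hU : U ∈ orthogonalGroup (Fin n) ℝ) (hV : V ∈ orthogonalGroup (Fin n) ℝ)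
    {x : Fin n → ℝ} (hx : ∀ i, 0 ≤ x i) (hmono : Monotone x) :
    singularValues (U * Matrix.diagonal x * V) = x := by
  have hcharpoly : (U * Matrix.diagonal x * V * star (U * Matrix.diagonal x * V)).charpoly
      = (Matrix.diagonal fun i => x i ^ 2).charpoly := by
    rw [mul_mul_mul_star_of_mem_unitary _ hV, charpoly_mul_comm, ← Matrix.mul_assoc,
      Unitary.star_mul_self_of_mem hU, Matrix.one_mul, star_eq_conjTranspose,
      diagonal_conjTranspose, diagonal_mul_diagonal]
    simp only [sq, star_trivial]
  have hsq := eigenvalues_comp_sort_eq (isHermitian_mul_conjTranspose_self _)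
    (fun i j hij => pow_le_pow_left₀ (hx i) (hmono hij) 2) hcharpoly
  funext i
  exact (congrArg Real.sqrt (congrFun hsq i)).trans (Real.sqrt_sq (hx i))

theorem exists_orthogonal_star_mul_mul_eq_diagonal_sq_singularValues {n : ℕ} (ξ : Mat n n) :
    ∃ U ∈ orthogonalGroup (Fin n) ℝ,
      star U * (ξ * star ξ) * U = Matrix.diagonal fun i => singularValues ξ i ^ 2 := by
  let hH := isHermitian_mul_conjTranspose_self ξ
  let Q : Mat n n := hH.eigenvectorUnitary
  let σ := Tuple.sort hH.eigenvalues
  have hQ : star Q * Q = 1 := Unitary.star_mul_self_of_mem hH.eigenvectorUnitary.2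
  have hdiag : star Q * (ξ * star ξ) * Q = Matrix.diagonal hH.eigenvalues :=
    (Unitary.conjStarAlgAut_star_apply ..).symm.trans hH.conjStarAlgAut_star_eigenvectorUnitary
  refine ⟨Q.submatrix id σ, mem_unitaryGroup_iff'.2 ?_, ?_⟩
  · calc star (Q.submatrix id σ) * Q.submatrix id σ = (star Q * Q).submatrix σ σ := rfl
      _ = 1 := by rw [hQ, submatrix_one_equiv]
  · calc star (Q.submatrix id σ) * (ξ * star ξ) * Q.submatrix id σ
        = (star Q * (ξ * star ξ) * Q).submatrix σ σ := rfl
      _ = Matrix.diagonal (hH.eigenvalues ∘ σ) := by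
        rw [hdiag, submatrix_diagonal_equiv]
      _ = Matrix.diagonal fun i => singularValues ξ i ^ 2 := congrArg _ <| funext fun i =>
        (Real.sq_sqrt ((posSemidef_self_mul_conjTranspose ξ).eigenvalues_nonneg _)).symm

theorem exists_orthonormalBasis_norm_smul_eq {𝕜 E ι : Type*} [RCLike 𝕜] [NormedAddCommGroup E]
    [InnerProductSpace 𝕜 E] [FiniteDimensional 𝕜 E] [Fintype ι]
    (card_ι : Module.finrank 𝕜 E = Fintype.card ι) {f : ι → E}
    (hf : Pairwise fun i j => inner 𝕜 (f i) (f j) = 0) :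
    ∃ b : OrthonormalBasis ι 𝕜 E, ∀ i, (‖f i‖ : 𝕜) • b i = f i := by
  have hon : Orthonormal 𝕜 (({i | f i ≠ 0} : Set ι).domRestrict fun i => (‖f i‖⁻¹ : 𝕜) • f i) := by
    refine ⟨fun i => norm_smul_inv_norm i.2, fun i j hij => ?_⟩
    simp [inner_smul_left, inner_smul_right, hf (Subtype.coe_ne_coe.2 hij)]
  obtain ⟨b, hb⟩ := hon.exists_orthonormalBasis_extension_of_card_eq card_ι
  refine ⟨b, fun i => ?_⟩
  obtain hi | hi := eq_or_ne (f i) 0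
  · simp [hi]
  · rw [hb i hi, smul_inv_smul₀ (by simpa using hi)]

theorem of_orthonormalBasis_mem_orthogonalGroup {n : Type*} [Fintype n] [DecidableEq n]
    (b : OrthonormalBasis n ℝ (EuclideanSpace ℝ n)) :
    (of fun i => (b i).ofLp) ∈ orthogonalGroup n ℝ := by
  refine mem_unitaryGroup_iff.2 (Matrix.ext fun i j => ?_)
  rw [Matrix.one_apply, ← orthonormal_iff_ite.1 b.orthonormal i j]
  simp [Matrix.mul_apply, PiLp.inner_apply, mul_comm]

theorem exists_orthogonal_diagonal_mul_eq {n : Type*} [Fintype n] [DecidableEq n]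
    {W : Matrix n n ℝ} {s : n → ℝ} (hs : ∀ i, 0 ≤ s i)
    (hW : W * star W = Matrix.diagonal fun i => s i ^ 2) :
    ∃ V ∈ orthogonalGroup n ℝ, Matrix.diagonal s * V = W := by
  let row (i : n) : EuclideanSpace ℝ n := WithLp.toLp 2 (W i)
  have hinner (i j : n) : inner ℝ (row i) (row j) = Matrix.diagonal (fun i => s i ^ 2) i j := by
    rw [← hW]
    simp [row, Matrix.mul_apply, PiLp.inner_apply, mul_comm]
  have hnorm (i : n) : ‖row i‖ = s i := by
    rw [norm_eq_sqrt_real_inner, hinner, diagonal_apply_eq, Real.sqrt_sq (hs i)]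
  obtain ⟨b, hb⟩ := exists_orthonormalBasis_norm_smul_eq (𝕜 := ℝ) finrank_euclideanSpace
    (f := row) fun i j hij => (hinner i j).trans (diagonal_apply_ne _ hij)
  refine ⟨_, of_orthonormalBasis_mem_orthogonalGroup b, Matrix.ext fun i j => ?_⟩
  rw [diagonal_mul, ← hnorm]
  exact congrFun (congrArg WithLp.ofLp (hb i)) j

theorem exists_singularValueDecomposition {n : ℕ} (ξ : Mat n n) :
    ∃ U ∈ orthogonalGroup (Fin n) ℝ, ∃ V ∈ orthogonalGroup (Fin n) ℝ,
      U * Matrix.diagonal (singularValues ξ) * V = ξ := by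
  obtain ⟨U, hU, hdiag⟩ := exists_orthogonal_star_mul_mul_eq_diagonal_sq_singularValues ξ
  have hW : star U * ξ * star (star U * ξ) = Matrix.diagonal fun i => singularValues ξ i ^ 2 := by
    rw [← hdiag, star_mul, star_star]
    simp only [Matrix.mul_assoc]
  obtain ⟨V, hV, hUξ⟩ := exists_orthogonal_diagonal_mul_eq (singularValues_nonneg ξ) hW
  refine ⟨U, hU, V, hV, ?_⟩
  rw [Matrix.mul_assoc, hUξ, ← Matrix.mul_assoc, Unitary.mul_star_self_of_mem hU, Matrix.one_mul]

theorem singularValues_mul_mul_of_mem_orthogonalGroup {n : ℕ} {U V : Mat n n}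
    (hU : U ∈ orthogonalGroup (Fin n) ℝ) (hV : V ∈ orthogonalGroup (Fin n) ℝ)
    (ξ : Mat n n) : singularValues (U * ξ * V) = singularValues ξ := by
  obtain ⟨U', hU', V', hV', hξ⟩ := exists_singularValueDecomposition ξ
  have hmul : U * ξ * V = U * U' * Matrix.diagonal (singularValues ξ) * (V' * V) := by
    conv_lhs => rw [← hξ]
    simp only [Matrix.mul_assoc]
  rw [hmul, singularValues_mul_diagonal_mul (mul_mem hU hU') (mul_mem hV' hV)
    (singularValues_nonneg ξ) (singularValues_monotone ξ)]

theorem norm_diagonal_singularValues {n : ℕ} (ξ : Mat n n) :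
    ‖Matrix.diagonal (singularValues ξ)‖ = ‖ξ‖ := by
  obtain ⟨U, hU, V, hV, hξ⟩ := exists_singularValueDecomposition ξ
  rw [← norm_mul_mul_of_mem_orthogonalGroup hU hV, hξ]

theorem exists_orthogonal_det_eq_neg_one_mul_diagonal_eq {n : Type*} [Fintype n] [DecidableEq n]
    {x : n → ℝ} {k : n} (hk : x k = 0) :
    ∃ J ∈ orthogonalGroup n ℝ, J.det = -1 ∧ J * Matrix.diagonal x = Matrix.diagonal x := by
  refine ⟨Matrix.diagonal (Function.update 1 k (-1)), mem_unitaryGroup_iff.2 ?_, ?_, ?_⟩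
  · rw [star_eq_conjTranspose, diagonal_conjTranspose, diagonal_mul_diagonal,
      ← diagonal_one]
    congr 1
    funext i
    obtain rfl | hi := eq_or_ne i k <;> simp [*]
  · simp [det_diagonal, Finset.prod_update_of_mem]
  · rw [diagonal_mul_diagonal]
    congr 1
    funext i
    obtain rfl | hi := eq_or_ne i k <;> simp [*]

theorem exists_singularValueDecomposition_det_mul_det_eq_one {n : ℕ} {ξ : Mat n n}
    (hξ : 0 ≤ ξ.det) :
    ∃ U ∈ orthogonalGroup (Fin n) ℝ, ∃ V ∈ orthogonalGroup (Fin n) ℝ,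
      U.det * V.det = 1 ∧ U * Matrix.diagonal (singularValues ξ) * V = ξ := by
  obtain ⟨U, hU, V, hV, hUV⟩ := exists_singularValueDecomposition ξ
  have hsq : U.det * V.det * (U.det * V.det) = 1 :=
    Unitary.star_mul_self_of_mem (mul_mem (det_of_mem_unitary hU)
      (det_of_mem_unitary hV))
  obtain hdet | hdet := mul_self_eq_one_iff.1 hsq
  · exact ⟨U, hU, V, hV, hdet, hUV⟩
  have hprod : ξ.det = -∏ i, singularValues ξ i := by
    conv_lhs => rw [← hUV]
    rw [det_mul, det_mul, det_diagonal]
    linear_combination (∏ i, singularValues ξ i) * hdet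
  have hprod_nonneg := Finset.prod_nonneg fun i (_ : i ∈ Finset.univ) => singularValues_nonneg ξ i
  obtain ⟨k, -, hk⟩ := Finset.prod_eq_zero_iff.1
    (show ∏ i, singularValues ξ i = 0 by linarith)
  obtain ⟨J, hJ, hJdet, hJdiag⟩ := exists_orthogonal_det_eq_neg_one_mul_diagonal_eq hk
  refine ⟨U * J, mul_mem hU hJ, V, hV, ?_, ?_⟩
  · rw [det_mul, hJdet]
    linarith
  · rw [Matrix.mul_assoc U, hJdiag, hUV]

/-- Invariance of a set of matrices under `ξ ↦ U ξ V` with `U`, `V` orthogonal and `UV` a rotation.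
The condition on determinants preserves the sign of `det ξ`, so that sets constrained by
`0 ≤ det ξ` can be invariant. -/
def IsBiInvariant {n : ℕ} (S : Set (Mat n n)) : Prop :=
  ∀ U ∈ orthogonalGroup (Fin n) ℝ, ∀ V ∈ orthogonalGroup (Fin n) ℝ,
    U.det * V.det = 1 → ∀ ξ ∈ S, U * ξ * V ∈ S

theorem isBiInvariant_setOf_singularValues_mem_and_det_nonneg {n : ℕ} (Λ : Set (Fin n → ℝ)) :
    IsBiInvariant {ξ : Mat n n | singularValues ξ ∈ Λ ∧ 0 ≤ ξ.det} := by
  rintro U hU V hV hdet ξ ⟨hΛ, hξ⟩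
  refine ⟨by rwa [singularValues_mul_mul_of_mem_orthogonalGroup hU hV], ?_⟩
  rwa [det_mul, det_mul, mul_right_comm, hdet, one_mul]

theorem isBounded_setOf_singularValues_mem {n : ℕ} {Λ : Set (Fin n → ℝ)}
    (hΛ : Bornology.IsBounded Λ) : Bornology.IsBounded {ξ : Mat n n | singularValues ξ ∈ Λ} := by
  let diag : (Fin n → ℝ) →L[ℝ] Mat n n :=
    LinearMap.toContinuousLinearMap (diagonalLinearMap (Fin n) ℝ ℝ)
  obtain ⟨C, hC⟩ := isBounded_iff_forall_norm_le.1 (diag.lipschitz.isBounded_image hΛ)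
  refine isBounded_iff_forall_norm_le.2 ⟨C, fun ξ hξ => ?_⟩
  rw [← norm_diagonal_singularValues]
  exact hC _ (mem_image_of_mem diag hξ)

namespace IsBiInvariant

variable {n : ℕ} {S : Set (Mat n n)}

theorem rcoF (hS : IsBiInvariant S) : IsBiInvariant (RcoF S) := fun U hU V hV hdet _ hξ =>
  mul_mul_mem_rcoF (.of_mul_eq_one _ hdet) (.of_mul_eq_one_right _ hdet) (hS U hU V hV hdet) hξ

theorem diagonal_singularValues_mem_iff (hS : IsBiInvariant S) {ξ : Mat n n} (hξ : 0 ≤ ξ.det) :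
    Matrix.diagonal (singularValues ξ) ∈ S ↔ ξ ∈ S := by
  obtain ⟨U, hU, V, hV, hdet, hUV⟩ := exists_singularValueDecomposition_det_mul_det_eq_one hξ
  refine ⟨fun h => hUV ▸ hS U hU V hV hdet _ h, fun h => ?_⟩
  rw [← star_mul_mul_mul_mul_star_of_mem_unitary hU hV (Matrix.diagonal (singularValues ξ)), hUV]
  refine hS _ (Unitary.star_mem hU) _ (Unitary.star_mem hV) ?_ ξ h
  simpa [star_eq_conjTranspose, det_conjTranspose] using hdet

theorem singularValues_image_eq (hS : IsBiInvariant S) (hdet : ∀ ξ ∈ S, 0 ≤ ξ.det) :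
    singularValues '' S = {x | (∀ i, 0 ≤ x i) ∧ Monotone x ∧ Matrix.diagonal x ∈ S} := by
  ext x
  constructor
  · rintro ⟨ξ, hξ, rfl⟩
    exact ⟨singularValues_nonneg ξ, singularValues_monotone ξ,
      (hS.diagonal_singularValues_mem_iff (hdet ξ hξ)).2 hξ⟩
  · rintro ⟨hx, hmono, hxS⟩
    exact ⟨_, hxS, by simpa using singularValues_mul_diagonal_mul (one_mem _) (one_mem _) hx hmono⟩

theorem eq_setOf_singularValues_mem (hS : IsBiInvariant S) (hdet : ∀ ξ ∈ S, 0 ≤ ξ.det) :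
    S = {ξ : Mat n n | singularValues ξ ∈ singularValues '' S ∧ 0 ≤ ξ.det} := by
  ext ξ
  refine ⟨fun h => ⟨mem_image_of_mem _ h, hdet ξ h⟩, fun ⟨h, hξ⟩ => ?_⟩
  rw [hS.singularValues_image_eq hdet] at h
  exact (hS.diagonal_singularValues_mem_iff hξ).1 h.2.2

theorem isCompact_singularValues_image (hS : IsBiInvariant S) (hdet : ∀ ξ ∈ S, 0 ≤ ξ.det)
    (hcomp : IsCompact S) : IsCompact (singularValues '' S) := by
  have hemb : Topology.IsClosedEmbedding (diagonalLinearMap (Fin n) ℝ ℝ) :=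
    LinearMap.isClosedEmbedding_of_injective
      (LinearMap.ker_eq_bot.2 diagonal_injective)
  have hcone : IsClosed {x : Fin n → ℝ | (∀ i, 0 ≤ x i) ∧ Monotone x} :=
    isClosed_Ici.inter isClosed_monotone
  convert (hemb.isCompact_preimage hcomp).inter_left hcone using 1
  rw [hS.singularValues_image_eq hdet]
  ext x
  exact and_assoc.symm

end IsBiInvariant

end SingularValues

theorem stmt7_general {n : ℕ} (ΛE : Set (Fin n → ℝ)) (hΛb : Bornology.IsBounded ΛE)
    (E : Set (Mat n n))
    (hE : E = {ξ : Mat n n | singularValues ξ ∈ ΛE ∧ 0 ≤ ξ.det}) :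
    IsCompact (singularValues '' RcoF E) ∧
    (∀ x ∈ singularValues '' RcoF E,
      (∀ i, 0 ≤ x i) ∧ ∀ i j : Fin n, i ≤ j → x i ≤ x j) ∧
    RcoF E = {ξ : Mat n n | singularValues ξ ∈ singularValues '' RcoF E ∧ 0 ≤ ξ.det} := by
  subst hE
  have hinv := (isBiInvariant_setOf_singularValues_mem_and_det_nonneg ΛE).rcoF
  have hdet : ∀ ξ ∈ RcoF {ξ : Mat n n | singularValues ξ ∈ ΛE ∧ 0 ≤ ξ.det}, 0 ≤ ξ.det :=
    fun ξ => det_nonneg_of_mem_rcoF fun _ => And.right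
  have hbdd : Bornology.IsBounded {ξ : Mat n n | singularValues ξ ∈ ΛE ∧ 0 ≤ ξ.det} :=
    (isBounded_setOf_singularValues_mem hΛb).subset fun _ => And.left
  refine ⟨hinv.isCompact_singularValues_image hdet (isCompact_rcoF hbdd), ?_,
    hinv.eq_setOf_singularValues_mem hdet⟩
  rintro _ ⟨ξ, -, rfl⟩
  exact ⟨singularValues_nonneg ξ, fun i j hij => singularValues_monotone ξ hij⟩

theorem stmt7 {n : ℕ} (ΛE : Set (Fin n → ℝ)) (hΛc : IsCompact ΛE)
    (hΛord : ∀ x ∈ ΛE, (∀ i, 0 ≤ x i) ∧ ∀ i j : Fin n, i ≤ j → x i ≤ x j)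
    (E : Set (Mat n n))
    (hE : E = {ξ : Mat n n | singularValues ξ ∈ ΛE ∧ 0 ≤ ξ.det}) :
    IsCompact (singularValues '' RcoF E) ∧
    (∀ x ∈ singularValues '' RcoF E,
      (∀ i, 0 ≤ x i) ∧ ∀ i j : Fin n, i ≤ j → x i ≤ x j) ∧
    RcoF E = {ξ : Mat n n | singularValues ξ ∈ singularValues '' RcoF E ∧ 0 ≤ ξ.det} :=
  stmt7_general ΛE hΛc.isBounded E hE

end Statements
end
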